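/- arXiv:0704.0656 — 2 statements merged into one kernel-verified Lean document; each statement's English description precedes it below -/
import Mathlib

section
/- Suppose y* ∈ C¹_rd(𝕋;ℝⁿ) is a weak local minimizer of 𝓛 with both endpoints fixed: there is δ > 0 such that 𝓛[y*] ≤ 𝓛[y] for every y ∈ C¹_rd(𝕋;ℝⁿ) with y(a) = y*(a), y(b) = y*(b) and ‖y − y*‖_{1,∞} < δ. Then the Euler–Lagrange equation in delta-differentiated form holds: the function g : 𝕋^k → ℝⁿ defined by g(t) = L_v(t, y*(t), y*^Δ(t)) − μ(t)·L_y(t, y*(t), y*^Δ(t)) is delta differentiable at every t ∈ 𝕋^{k²} with g^Δ(t) = L_y(t, y*(t), y*^Δ(t)). -/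
open Set Filter

noncomputable section

-- Forward jump operator of the set `S`.
open Classical in
def tsSigma (S : Set ℝ) (t : ℝ) : ℝ :=
  if ({s | s ∈ S ∧ t < s}).Nonempty then sInf {s | s ∈ S ∧ t < s} else t

-- Backward jump operator of the set `S`.
open Classical in
def tsRho (S : Set ℝ) (t : ℝ) : ℝ :=
  if ({s | s ∈ S ∧ s < t}).Nonempty then sSup {s | s ∈ S ∧ s < t} else t

/-- Graininess function. -/
def tsMu (S : Set ℝ) (t : ℝ) : ℝ := tsSigma S t - t

/-- `S^k = S \ (ρ(max S), max S]`. -/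
def tsTk (S : Set ℝ) : Set ℝ := S \ Set.Ioc (tsRho S (sSup S)) (sSup S)

/-- Delta differentiability at `t` of `f` regarded as a function on the time scale `S`,
with delta derivative `d`. -/
def deltaDiffAt {E : Type*} [NormedAddCommGroup E] [NormedSpace ℝ E]
    (S : Set ℝ) (f : ℝ → E) (t : ℝ) (d : E) : Prop :=
  ∀ ε > 0, ∃ δ > 0, ∀ s ∈ S ∩ Set.Ioo (t - δ) (t + δ),
    ‖f (tsSigma S t) - f s - (tsSigma S t - s) • d‖ ≤ ε * |tsSigma S t - s|

/-- rd-continuity of `f` on its domain `S`: continuity (within `S`) at right-dense points and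
existence of a finite left-sided limit along `S` at left-dense points. -/
def RdContinuousOn {E : Type*} [NormedAddCommGroup E]
    (S : Set ℝ) (f : ℝ → E) : Prop :=
  ∀ t ∈ S, (tsSigma S t = t → ContinuousWithinAt f S t) ∧
    (tsRho S t = t → ∃ l : E, Filter.Tendsto f (nhdsWithin t (S ∩ Set.Iio t)) (nhds l))

/-- `y ∈ C¹_rd(T)`, with delta derivative `yd`. -/
def C1rd {E : Type*} [NormedAddCommGroup E] [NormedSpace ℝ E]
    (T : Set ℝ) (y yd : ℝ → E) : Prop :=
  (∀ t ∈ tsTk T, deltaDiffAt T y t (yd t)) ∧ RdContinuousOn (tsTk T) yd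

/-- `F` is a delta antiderivative of `f` on the time scale `S`; the delta integral
`∫_c^d f Δt` is `F d - F c` for any such `F`. -/
def IsDeltaAntideriv {E : Type*} [NormedAddCommGroup E] [NormedSpace ℝ E]
    (S : Set ℝ) (f F : ℝ → E) : Prop :=
  ∀ t ∈ tsTk S, deltaDiffAt S F t (f t)

/-- Sup norm of `f` over the set `S`. -/
def tsSupNorm {E : Type*} [NormedAddCommGroup E] (S : Set ℝ) (f : ℝ → E) : ℝ :=
  sSup ((fun t => ‖f t‖) '' S)

abbrev En (n : ℕ) : Type := EuclideanSpace ℝ (Fin n)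

open MeasureTheory Topology

section basics

lemma tsSigma_ge (S : Set ℝ) (t : ℝ) : t ≤ tsSigma S t := by
  unfold tsSigma
  split_ifs with h
  · exact le_csInf h (fun s hs => hs.2.le)
  · exact le_rfl

lemma tsSigma_le {S : Set ℝ} {t s : ℝ} (hs : s ∈ S) (h : t < s) : tsSigma S t ≤ s := by
  unfold tsSigma
  rw [if_pos ⟨s, hs, h⟩]
  exact csInf_le ⟨t, fun x hx => hx.2.le⟩ ⟨hs, h⟩

lemma tsRho_le (S : Set ℝ) (t : ℝ) : tsRho S t ≤ t := by
  unfold tsRho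
  split_ifs with h
  · exact csSup_le h (fun s hs => hs.2.le)
  · exact le_rfl

lemma tsRho_ge {S : Set ℝ} {t s : ℝ} (hs : s ∈ S) (h : s < t) : s ≤ tsRho S t := by
  unfold tsRho
  rw [if_pos ⟨s, hs, h⟩]
  exact le_csSup ⟨t, fun x hx => hx.2.le⟩ ⟨hs, h⟩

lemma tsSigma_mem {S : Set ℝ} (hS : IsClosed S) {t : ℝ} (ht : t ∈ S) : tsSigma S t ∈ S := by
  unfold tsSigma
  split_ifs with h
  · have h1 : sInf {s | s ∈ S ∧ t < s} ∈ closure {s | s ∈ S ∧ t < s} :=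
      csInf_mem_closure h ⟨t, fun x hx => hx.2.le⟩
    exact closure_minimal (fun x hx => hx.1) hS h1
  · exact ht

lemma tsRho_mem {S : Set ℝ} (hS : IsClosed S) {t : ℝ} (ht : t ∈ S) : tsRho S t ∈ S := by
  unfold tsRho
  split_ifs with h
  · have h1 : sSup {s | s ∈ S ∧ s < t} ∈ closure {s | s ∈ S ∧ s < t} :=
      csSup_mem_closure h ⟨t, fun x hx => hx.2.le⟩
    exact closure_minimal (fun x hx => hx.1) hS h1
  · exact ht

structure TSS (T : Set ℝ) (a b : ℝ) : Prop where
  closed : IsClosed T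
  amem : a ∈ T
  bmem : b ∈ T
  sub : T ⊆ Icc a b
  lt : a < b

variable {T : Set ℝ} {a b : ℝ}

lemma TSS.sSup_eq (h : TSS T a b) : sSup T = b :=
  IsGreatest.csSup_eq ⟨h.bmem, fun _ hx => (h.sub hx).2⟩

lemma TSS.Tk_eq (h : TSS T a b) : tsTk T = T ∩ Iic (tsRho T b) := by
  unfold tsTk
  rw [h.sSup_eq]
  ext x
  constructor
  · rintro ⟨hx, hx'⟩
    refine ⟨hx, ?_⟩
    by_contra hc
    exact hx' ⟨not_le.1 hc, (h.sub hx).2⟩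
  · rintro ⟨hx, hx'⟩
    exact ⟨hx, fun hc => not_lt.2 hx' hc.1⟩

lemma TSS.Tk_sub (h : TSS T a b) : tsTk T ⊆ T := fun _ hx => hx.1

lemma TSS.Tk_closed (h : TSS T a b) : IsClosed (tsTk T) := by
  rw [h.Tk_eq]; exact h.closed.inter isClosed_Iic

lemma TSS.Tk_compact (h : TSS T a b) : IsCompact (tsTk T) :=
  isCompact_Icc.of_isClosed_subset h.Tk_closed (h.Tk_sub.trans h.sub)

lemma TSS.mem_Tk_of_lt (h : TSS T a b) {x : ℝ} (hx : x ∈ T) (hb : x < b) : x ∈ tsTk T := by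
  rw [h.Tk_eq]; exact ⟨hx, tsRho_ge hx hb⟩

lemma TSS.Tk_lower (h : TSS T a b) {x y : ℝ} (hx : x ∈ T) (hy : y ∈ tsTk T) (hxy : x ≤ y) :
    x ∈ tsTk T := by
  rw [h.Tk_eq] at *; exact ⟨hx, hxy.trans hy.2⟩

lemma TSS.sigma_Tk (h : TSS T a b) {t : ℝ} (ht : t ∈ tsTk T) (hs : tsSigma T t = t) :
    tsSigma (tsTk T) t = t := by
  by_contra hc
  have hlt : t < tsSigma (tsTk T) t := lt_of_le_of_ne (tsSigma_ge _ _) (Ne.symm hc)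
  have hm := tsSigma_mem h.Tk_closed ht
  have hne : ({s | s ∈ T ∧ t < s}).Nonempty := ⟨_, h.Tk_sub hm, hlt⟩
  have he : sInf {s | s ∈ T ∧ t < s} < tsSigma (tsTk T) t := by
    have : tsSigma T t = sInf {s | s ∈ T ∧ t < s} := by unfold tsSigma; rw [if_pos hne]
    rw [← this, hs]; exact hlt
  obtain ⟨x, hx, hx'⟩ := exists_lt_of_csInf_lt hne he
  have := tsSigma_le (h.Tk_lower hx.1 hm hx'.le) hx.2
  linarith

def tsP (T : Set ℝ) (a x : ℝ) : ℝ := sSup (T ∩ Iic (max x a))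

def tsNu (T : Set ℝ) (a b : ℝ) : Measure ℝ := Measure.map (tsP T a) (volume.restrict (Ico a b))

lemma TSS.P_ne (h : TSS T a b) (x : ℝ) : (T ∩ Iic (max x a)).Nonempty :=
  ⟨a, h.amem, mem_Iic.2 (le_max_right _ _)⟩

lemma TSS.P_bdd (x : ℝ) : BddAbove (T ∩ Iic (max x a)) := ⟨max x a, fun _ hy => hy.2⟩

lemma TSS.P_mono (h : TSS T a b) : Monotone (tsP T a) := by
  intro x y hxy
  exact csSup_le_csSup (TSS.P_bdd y) (h.P_ne x)
    (inter_subset_inter_right _ (Iic_subset_Iic.2 (max_le_max hxy le_rfl)))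

lemma TSS.P_mem (h : TSS T a b) (x : ℝ) : tsP T a x ∈ T ∩ Iic (max x a) :=
  (h.closed.inter isClosed_Iic).csSup_mem (h.P_ne x) (TSS.P_bdd x)

lemma TSS.le_P (h : TSS T a b) {s x : ℝ} (hs : s ∈ T) (hx : a ≤ x) : s ≤ tsP T a x ↔ s ≤ x := by
  constructor
  · intro h1
    have := (h.P_mem x).2
    rw [max_eq_left hx] at this
    exact h1.trans this
  · intro h1
    exact le_csSup (TSS.P_bdd x) ⟨hs, h1.trans (le_max_left _ _)⟩

lemma TSS.nu_Ico (h : TSS T a b) {s t : ℝ} (hs : s ∈ T) (ht : t ∈ T) :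
    tsNu T a b (Ico s t) = ENNReal.ofReal (t - s) := by
  unfold tsNu
  rw [Measure.map_apply h.P_mono.measurable measurableSet_Ico,
    Measure.restrict_apply (h.P_mono.measurable measurableSet_Ico)]
  have : tsP T a ⁻¹' Ico s t ∩ Ico a b = Ico s t := by
    ext x
    constructor
    · rintro ⟨⟨h1, h2⟩, h3, h4⟩
      exact ⟨(h.le_P hs h3).1 h1, not_le.1 fun hc => not_le.2 h2 ((h.le_P ht h3).2 hc)⟩
    · rintro ⟨h1, h2⟩
      have h3 : a ≤ x := (h.sub hs).1.trans h1
      exact ⟨⟨(h.le_P hs h3).2 h1, not_le.1 fun hc => not_le.2 h2 ((h.le_P ht h3).1 hc)⟩, h3,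
        h2.trans_le (h.sub ht).2⟩
  rw [this, Real.volume_Ico]

lemma TSS.nu_real_Ico (h : TSS T a b) {s t : ℝ} (hs : s ∈ T) (ht : t ∈ T) (hst : s ≤ t) :
    (tsNu T a b).real (Ico s t) = t - s := by
  rw [Measure.real, h.nu_Ico hs ht, ENNReal.toReal_ofReal (by linarith)]

instance : IsFiniteMeasure (tsNu T a b) := by unfold tsNu; infer_instance

lemma TSS.nu_ae (h : TSS T a b) : ∀ᵐ x ∂(tsNu T a b), x ∈ tsTk T ∧ a ≤ x ∧ x < b := by
  unfold tsNu
  have hm : MeasurableSet {x | x ∈ tsTk T ∧ a ≤ x ∧ x < b} :=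
    h.Tk_closed.measurableSet.inter measurableSet_Ico
  rw [ae_map_iff h.P_mono.measurable.aemeasurable hm]
  filter_upwards [ae_restrict_mem measurableSet_Ico] with x hx
  have h1 := h.P_mem x
  rw [max_eq_left hx.1] at h1
  have h2 : tsP T a x < b := lt_of_le_of_lt h1.2 hx.2
  exact ⟨h.mem_Tk_of_lt h1.1 h2, (h.sub h1.1).1, h2⟩

lemma TSS.Ico_sigma (h : TSS T a b) {t : ℝ} (ht : t ∈ T) :
    tsNu T a b (Ico t (tsSigma T t)) = ENNReal.ofReal (tsMu T t) :=
  h.nu_Ico ht (tsSigma_mem h.closed ht)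

lemma TSS.nu_singleton (h : TSS T a b) {t : ℝ} (ht : t ∈ T) (htb : t ∈ tsTk T) :
    tsNu T a b {t} = ENNReal.ofReal (tsMu T t) := by
  rw [← h.Ico_sigma ht]
  by_cases hs : tsSigma T t = t
  · rw [hs, Ico_self, measure_empty]
    by_cases hb : t < b
    · -- approximations
      have hne : ({s | s ∈ T ∧ t < s}).Nonempty := ⟨b, h.bmem, hb⟩
      have hi : tsSigma T t = sInf {s | s ∈ T ∧ t < s} := by unfold tsSigma; rw [if_pos hne]
      refine le_antisymm (ENNReal.le_of_forall_pos_le_add fun ε hε _ => ?_) bot_le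
      have : sInf {s | s ∈ T ∧ t < s} < t + ε := by rw [← hi, hs]; simpa using hε
      obtain ⟨x, hx, hx'⟩ := exists_lt_of_csInf_lt hne this
      calc tsNu T a b {t} ≤ tsNu T a b (Ico t x) := measure_mono (by
              rintro y rfl; exact ⟨le_rfl, hx.2⟩)
        _ = ENNReal.ofReal (x - t) := h.nu_Ico ht hx.1
        _ ≤ ENNReal.ofReal ε := ENNReal.ofReal_le_ofReal (by linarith)
        _ = 0 + ε := by simp
    · have : ∀ᵐ x ∂(tsNu T a b), ¬ (x ∈ ({t} : Set ℝ)) := by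
        filter_upwards [h.nu_ae] with x hx hxt
        rw [mem_singleton_iff.1 hxt] at hx
        exact hb hx.2.2
      simpa [ae_iff] using this
  · have hlt : t < tsSigma T t := lt_of_le_of_ne (tsSigma_ge _ _) (Ne.symm hs)
    apply measure_congr
    filter_upwards [h.nu_ae] with x hx
    apply propext
    change x ∈ ({t} : Set ℝ) ↔ x ∈ Ico t (tsSigma T t)
    constructor
    · rintro rfl; exact ⟨le_rfl, hlt⟩
    · rintro ⟨h1, h2⟩
      by_contra hc
      have := tsSigma_le hx.1.1 (lt_of_le_of_ne h1 (fun e => hc e.symm))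
      linarith

end basics
section rd

variable {T S : Set ℝ} {a b : ℝ}
variable {E : Type*} [NormedAddCommGroup E] [NormedSpace ℝ E]

lemma rd_bounded (hS : IsCompact S) {f : ℝ → E} (hf : RdContinuousOn S f) :
    ∃ M, 0 ≤ M ∧ ∀ t ∈ S, ‖f t‖ ≤ M := by
  suffices h : ∃ M, ∀ t ∈ S, ‖f t‖ ≤ M by
    obtain ⟨M, hM⟩ := h
    exact ⟨max M 0, le_max_right _ _, fun t ht => (hM t ht).trans (le_max_left _ _)⟩
  refine hS.induction_on (p := fun s => ∃ M, ∀ t ∈ s, ‖f t‖ ≤ M) ⟨0, by simp⟩ ?_ ?_ ?_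
  · rintro s t hst ⟨M, hM⟩
    exact ⟨M, fun x hx => hM x (hst hx)⟩
  · rintro s t ⟨M, hM⟩ ⟨N, hN⟩
    refine ⟨max M N, ?_⟩
    rintro x (hx | hx)
    · exact (hM x hx).trans (le_max_left _ _)
    · exact (hN x hx).trans (le_max_right _ _)
  · intro t ht
    by_cases hs : tsSigma S t = t
    · have h1 := ((hf t ht).1 hs).norm
      have h2 : ∀ᶠ x in 𝓝[S] t, ‖f x‖ < ‖f t‖ + 1 := h1.eventually_lt_const (by linarith)
      exact ⟨_, h2, ‖f t‖ + 1, fun x hx => le_of_lt hx⟩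
    · have hlt : t < tsSigma S t := lt_of_le_of_ne (tsSigma_ge _ _) (Ne.symm hs)
      have hleft : ∃ M, ∀ᶠ x in 𝓝[S ∩ Iio t] t, ‖f x‖ ≤ M := by
        by_cases hr : tsRho S t = t
        · obtain ⟨l, hl⟩ := (hf t ht).2 hr
          exact ⟨‖l‖ + 1, (hl.norm.eventually_lt_const (by linarith)).mono fun x hx => le_of_lt hx⟩
        · have hlt' : tsRho S t < t := lt_of_le_of_ne (tsRho_le _ _) hr
          refine ⟨0, ?_⟩
          filter_upwards [self_mem_nhdsWithin, mem_nhdsWithin_of_mem_nhds (Ioi_mem_nhds hlt')]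
            with x hx hx'
          exact absurd (tsRho_ge hx.1 hx.2) (not_le.2 hx')
      obtain ⟨M, hM⟩ := hleft
      rw [eventually_nhdsWithin_iff] at hM
      refine ⟨{x | ‖f x‖ ≤ max M ‖f t‖}, ?_, max M ‖f t‖, fun x hx => hx⟩
      filter_upwards [self_mem_nhdsWithin, mem_nhdsWithin_of_mem_nhds (Iio_mem_nhds hlt),
        mem_nhdsWithin_of_mem_nhds hM] with x hx hx' hx''
      rcases lt_trichotomy x t with h | h | h
      · exact (hx'' ⟨hx, h⟩).trans (le_max_left _ _)
      · subst h; exact le_max_right _ _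
      · exact absurd (tsSigma_le hx h) (not_le.2 hx')

lemma rd_measurable [MeasurableSpace E] [BorelSpace E] (hS : IsClosed S) {f : ℝ → E}
    (hf : RdContinuousOn S f) : Measurable (S.indicator f) := by
  set D := {x ∈ S | tsSigma S x ≠ x} with hD
  have hDc : D.Countable := by
    refine (countable_setOfPred_isolated_right_within (s := S)).mono ?_
    rintro x ⟨hx, hx'⟩
    refine ⟨hx, ?_⟩
    have hlt : x < tsSigma S x := lt_of_le_of_ne (tsSigma_ge _ _) (Ne.symm hx')
    rw [← Filter.empty_mem_iff_bot]
    filter_upwards [self_mem_nhdsWithin, mem_nhdsWithin_of_mem_nhds (Iio_mem_nhds hlt)] with y hy hy'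
    exact absurd (tsSigma_le hy.1 hy.2) (not_le.2 hy')
  have hcont : ContinuousOn f (S \ D) := by
    intro x hx
    have : tsSigma S x = x := by
      by_contra hc
      exact hx.2 ⟨hx.1, hc⟩
    exact ((hf x hx.1).1 this).mono sdiff_subset
  have hm : Measurable ((S \ D).indicator f) := by
    classical
    rw [← Set.piecewise_eq_indicator]
    exact hcont.measurable_piecewise continuousOn_const (hS.measurableSet.diff hDc.measurableSet)
  refine hm.measurable_of_countable_ne (hDc.mono ?_)
  intro x hx
  by_contra hc
  apply hx
  by_cases h : x ∈ S
  · rw [indicator_of_mem h, indicator_of_mem (show x ∈ S \ D from ⟨h, hc⟩)]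
  · rw [indicator_of_notMem h, indicator_of_notMem fun h' => h h'.1]

lemma deltaDiffAt.continuousWithinAt {f : ℝ → E} {t : ℝ} {d : E} (ht : t ∈ S)
    (h : deltaDiffAt S f t d) : ContinuousWithinAt f S t := by
  set σ := tsSigma S t with hσ
  have hge : t ≤ σ := tsSigma_ge _ _
  rw [Metric.continuousWithinAt_iff]
  intro ε hε
  have hμ : 0 < 2 * (σ - t) + 1 := by linarith
  obtain ⟨δ, hδ, H⟩ := h (ε / 2 / (2 * (σ - t) + 1)) (by positivity)
  have hd : 0 < 2 * (‖d‖ + 1) := by positivity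
  refine ⟨min δ (min 1 (ε / (2 * (‖d‖ + 1)))), by positivity, fun {s} hs hst => ?_⟩
  rw [Real.dist_eq] at hst
  have h1 : |s - t| < δ := hst.trans_le (min_le_left _ _)
  have h2 : |s - t| < 1 := hst.trans_le ((min_le_right _ _).trans (min_le_left _ _))
  have h3 : |s - t| < ε / (2 * (‖d‖ + 1)) := hst.trans_le ((min_le_right _ _).trans (min_le_right _ _))
  have a1 := H s ⟨hs, by have := abs_lt.1 h1; constructor <;> linarith⟩
  have a2 := H t ⟨ht, by constructor <;> linarith⟩
  rw [← hσ] at a1 a2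
  have e : f s - f t = (f σ - f t - (σ - t) • d) - (f σ - f s - (σ - s) • d) + (s - t) • d := by
    module
  have k := norm_add_le ((f σ - f t - (σ - t) • d) - (f σ - f s - (σ - s) • d)) ((s - t) • d)
  have k' := norm_sub_le (f σ - f t - (σ - t) • d) (f σ - f s - (σ - s) • d)
  rw [dist_eq_norm, e]
  have b1 : |σ - t| = σ - t := abs_of_nonneg (by linarith)
  have b2 : |σ - s| ≤ (σ - t) + |s - t| := by
    have : σ - s = (σ - t) - (s - t) := by ring
    rw [this]; exact (abs_sub _ _).trans (by rw [b1])
  rw [norm_smul, Real.norm_eq_abs] at k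
  have b3 : |s - t| * (2 * (‖d‖ + 1)) < ε := (lt_div_iff₀ hd).1 h3
  have b4 : ε / 2 / (2 * (σ - t) + 1) * (|σ - t| + |σ - s|) ≤ ε / 2 := by
    rw [div_mul_eq_mul_div, div_le_iff₀ hμ]
    apply mul_le_mul_of_nonneg_left _ (by positivity)
    linarith
  nlinarith [norm_nonneg d, abs_nonneg (s - t)]

lemma rd_comp {X : Type*} [NormedAddCommGroup X] (hST : S ⊆ T)
    {Φ : ℝ → E → E → X}
    (hΦ : ContinuousOn (fun p : ℝ × E × E => Φ p.1 p.2.1 p.2.2) (T ×ˢ (univ : Set (E × E))))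
    {y yd : ℝ → E} (hy : ContinuousOn y S) (hyd : RdContinuousOn S yd) :
    RdContinuousOn S (fun t => Φ t (y t) (yd t)) := by
  intro t ht
  have key : ∀ (A : Set ℝ) (l : E), A ⊆ S → Tendsto yd (𝓝[A] t) (𝓝 l) →
      Tendsto (fun t => Φ t (y t) (yd t)) (𝓝[A] t) (𝓝 (Φ t (y t) l)) := by
    intro A l hA hl
    have h1 := hΦ (t, y t, l) ⟨hST ht, mem_univ _⟩
    have h2 : Tendsto (fun s => (s, y s, yd s)) (𝓝[A] t)
        (𝓝[T ×ˢ (univ : Set (E × E))] (t, y t, l)) := by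
      rw [tendsto_nhdsWithin_iff]
      refine ⟨?_, ?_⟩
      · exact (tendsto_id.mono_left nhdsWithin_le_nhds).prodMk_nhds
          (((hy t ht).mono hA).tendsto.prodMk_nhds hl)
      · filter_upwards [self_mem_nhdsWithin] with s hs
        exact ⟨hST (hA hs), mem_univ _⟩
    exact h1.tendsto.comp h2
  refine ⟨fun h => key S (yd t) Subset.rfl ((hyd t ht).1 h), fun h => ?_⟩
  obtain ⟨l, hl⟩ := (hyd t ht).2 h
  exact ⟨_, key _ l inter_subset_left hl⟩

lemma ContinuousOn.rd {f : ℝ → E} (hf : ContinuousOn f S) : RdContinuousOn S f := fun t ht =>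
  ⟨fun _ => hf t ht, fun _ => ⟨f t, (hf t ht).mono inter_subset_left⟩⟩

lemma RdContinuousOn.add_smul {f g : ℝ → E} (hf : RdContinuousOn S f) (hg : RdContinuousOn S g)
    (c : ℝ) : RdContinuousOn S (fun t => f t + c • g t) := by
  intro t ht
  refine ⟨fun h => ((hf t ht).1 h).add (((hg t ht).1 h).const_smul c), fun h => ?_⟩
  obtain ⟨l, hl⟩ := (hf t ht).2 h
  obtain ⟨m, hm⟩ := (hg t ht).2 h
  exact ⟨_, hl.add (hm.const_smul c)⟩

lemma deltaDiffAt.add_smul {f g : ℝ → E} {t : ℝ} {d e : E} (hf : deltaDiffAt S f t d)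
    (hg : deltaDiffAt S g t e) (c : ℝ) : deltaDiffAt S (fun t => f t + c • g t) t (d + c • e) := by
  intro ε hε
  obtain ⟨δ₁, h1, H1⟩ := hf (ε / 2) (by positivity)
  obtain ⟨δ₂, h2, H2⟩ := hg (ε / 2 / (|c| + 1)) (by positivity)
  refine ⟨min δ₁ δ₂, by positivity, fun s hs => ?_⟩
  have m1 := min_le_left δ₁ δ₂
  have m2 := min_le_right δ₁ δ₂
  have k1 := H1 s ⟨hs.1, by have := hs.2.1; linarith, by have := hs.2.2; linarith⟩
  have k2 := H2 s ⟨hs.1, by have := hs.2.1; linarith, by have := hs.2.2; linarith⟩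
  set σ := tsSigma S t
  have e1 : f σ + c • g σ - (f s + c • g s) - (σ - s) • (d + c • e) =
    (f σ - f s - (σ - s) • d) + c • (g σ - g s - (σ - s) • e) := by module
  rw [e1]
  refine (norm_add_le _ _).trans ?_
  rw [norm_smul, Real.norm_eq_abs]
  have : |c| * ‖g σ - g s - (σ - s) • e‖ ≤ (|c| + 1) * (ε / 2 / (|c| + 1) * |σ - s|) :=
    mul_le_mul (by linarith) k2 (norm_nonneg _) (by positivity)
  have e2 : (|c| + 1) * (ε / 2 / (|c| + 1) * |σ - s|) = ε / 2 * |σ - s| := by field_simp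
  linarith

end rd
section integ

variable {T : Set ℝ} {a b : ℝ}
variable {E : Type*} [NormedAddCommGroup E] [NormedSpace ℝ E] [MeasurableSpace E] [BorelSpace E]
  [SecondCountableTopology E]

lemma rd_aesm (h : TSS T a b) {f : ℝ → E} (hf : RdContinuousOn (tsTk T) f) :
    AEStronglyMeasurable f (tsNu T a b) := by
  refine (rd_measurable h.Tk_closed hf).aestronglyMeasurable.congr ?_
  filter_upwards [h.nu_ae] with x hx
  rw [indicator_of_mem hx.1]

lemma rd_integrable (h : TSS T a b) {f : ℝ → E} (hf : RdContinuousOn (tsTk T) f) :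
    Integrable f (tsNu T a b) := by
  obtain ⟨M, _, hM⟩ := rd_bounded h.Tk_compact hf
  refine Integrable.of_bound (rd_aesm h hf) M ?_
  filter_upwards [h.nu_ae] with x hx
  exact hM x hx.1

def tsH (T : Set ℝ) (a b : ℝ) (f : ℝ → E) (t : ℝ) : E := ∫ x in Iio t, f x ∂(tsNu T a b)

omit [MeasurableSpace E] [BorelSpace E] [SecondCountableTopology E] in
lemma tsH_sub {f : ℝ → E} (hf : Integrable f (tsNu T a b)) {s t : ℝ} (hst : s ≤ t) :
    tsH T a b f t - tsH T a b f s = ∫ x in Ico s t, f x ∂(tsNu T a b) := by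
  unfold tsH
  have : Iio t = Iio s ∪ Ico s t := (Iio_union_Ico_eq_Iio hst).symm
  rw [this, setIntegral_union _ measurableSet_Ico hf.integrableOn hf.integrableOn]
  · abel
  · rw [Set.disjoint_left]
    intro x hx hx'
    exact not_le.2 hx hx'.1

omit [MeasurableSpace E] [BorelSpace E] [SecondCountableTopology E] in
lemma tsH_a (h : TSS T a b) {f : ℝ → E} : tsH T a b f a = 0 := by
  unfold tsH
  have : tsNu T a b (Iio a) = 0 := by
    have : ∀ᵐ x ∂(tsNu T a b), ¬ (x ∈ (Iio a : Set ℝ)) := by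
      filter_upwards [h.nu_ae] with x hx hxt
      exact absurd hx.2.1 (not_le.2 hxt)
    exact measure_eq_zero_iff_ae_notMem.2 this
  exact setIntegral_measure_zero _ this

omit [MeasurableSpace E] [BorelSpace E] [SecondCountableTopology E] in
lemma tsH_b (h : TSS T a b) {f : ℝ → E} : tsH T a b f b = ∫ x, f x ∂(tsNu T a b) := by
  unfold tsH
  rw [Measure.restrict_eq_self_of_ae_mem]
  filter_upwards [h.nu_ae] with x hx using hx.2.2

omit [MeasurableSpace E] [BorelSpace E] [SecondCountableTopology E] in
lemma tsH_est [CompleteSpace E] (h : TSS T a b) {f : ℝ → E} (hf : Integrable f (tsNu T a b)) {s t : ℝ}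
    (hs : s ∈ T) (ht : t ∈ T) (hst : s ≤ t) (d : E) {C : ℝ}
    (hC : ∀ x ∈ tsTk T, s ≤ x → x < t → ‖f x - d‖ ≤ C) :
    ‖tsH T a b f t - tsH T a b f s - (t - s) • d‖ ≤ C * (t - s) := by
  have e : tsH T a b f t - tsH T a b f s - (t - s) • d = ∫ x in Ico s t, (f x - d) ∂(tsNu T a b) := by
    rw [integral_sub hf.integrableOn (integrable_const d), tsH_sub hf hst, setIntegral_const,
      h.nu_real_Ico hs ht hst]
  rw [e, ← h.nu_real_Ico hs ht hst]
  refine norm_setIntegral_le_of_norm_le_const_ae' (measure_lt_top _ _) ?_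
  filter_upwards [h.nu_ae] with x hx hx'
  exact hC x hx.1 hx'.1 hx'.2

lemma tsH_deltaDiff [CompleteSpace E] (h : TSS T a b) {f : ℝ → E} (hf : RdContinuousOn (tsTk T) f) {A : Set ℝ}
    (hA : A ⊆ T) {t : ℝ} (ht : t ∈ tsTk T) (hσ : tsSigma A t ∈ T)
    (hgap : ∀ x ∈ T, t < x → tsSigma A t ≤ x)
    (hc : tsSigma A t = t → ContinuousWithinAt f (tsTk T) t) :
    deltaDiffAt A (tsH T a b f) t (f t) := by
  have hi := rd_integrable h hf
  have hge := tsSigma_ge A t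
  obtain ⟨M, hM0, hM⟩ := rd_bounded h.Tk_compact hf
  intro ε hε
  set σ := tsSigma A t with hσd
  by_cases hs : σ = t
  · have hc' := hc hs
    rw [Metric.continuousWithinAt_iff] at hc'
    obtain ⟨δ, hδ, H⟩ := hc' ε hε
    refine ⟨δ, hδ, fun s hs' => ?_⟩
    have hsT := hA hs'.1
    rw [hs]
    rcases le_total s t with hst | hst
    · rw [abs_of_nonneg (by linarith)]
      refine tsH_est h hi hsT ht.1 hst _ fun x hx h1 h2 => ?_
      rw [← dist_eq_norm]
      refine (H hx ?_).le
      rw [Real.dist_eq, abs_lt]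
      have := hs'.2.1; constructor <;> linarith
    · rw [abs_of_nonpos (by linarith), ← norm_neg]
      have e : -(tsH T a b f t - tsH T a b f s - (t - s) • f t) =
        tsH T a b f s - tsH T a b f t - (s - t) • f t := by module
      rw [e, neg_sub]
      refine tsH_est h hi ht.1 hsT hst _ fun x hx h1 h2 => ?_
      rw [← dist_eq_norm]
      refine (H hx ?_).le
      rw [Real.dist_eq, abs_lt]
      have := hs'.2.2; constructor <;> linarith
  · have hlt : t < σ := lt_of_le_of_ne hge (Ne.symm hs)
    have hp : 0 < σ - t := by linarith
    refine ⟨min (σ - t) (ε * (σ - t) / (2 * M + 1)), by positivity, fun s hs' => ?_⟩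
    have hsT := hA hs'.1
    have m1 := min_le_left (σ - t) (ε * (σ - t) / (2 * M + 1))
    have m2 := min_le_right (σ - t) (ε * (σ - t) / (2 * M + 1))
    have hst : s ≤ t := by
      by_contra hc
      have := hgap s hsT (not_le.1 hc)
      have := hs'.2.2
      linarith
    have e1 := tsH_est h hi ht.1 hσ hge (f t) (C := 0) (by
      intro x hx h1 h2
      have : x = t := by
        by_contra hne
        have := hgap x hx.1 (lt_of_le_of_ne h1 (Ne.symm hne))
        linarith
      rw [this]; simp)
    have e2 := tsH_est h hi hsT ht.1 hst (f t) (C := 2 * M) (by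
      intro x hx h1 h2
      have := norm_sub_le (f x) (f t)
      have := hM x hx
      have := hM t ht
      linarith)
    have e : tsH T a b f σ - tsH T a b f s - (σ - s) • f t =
      (tsH T a b f σ - tsH T a b f t - (σ - t) • f t) +
      (tsH T a b f t - tsH T a b f s - (t - s) • f t) := by module
    rw [e, abs_of_nonneg (by linarith)]
    refine (norm_add_le _ _).trans ?_
    have h3 : t - s ≤ ε * (σ - t) / (2 * M + 1) := by have := hs'.2.1; linarith
    rw [le_div_iff₀ (by positivity)] at h3
    nlinarith

lemma tsH_antideriv [CompleteSpace E] (h : TSS T a b) {f : ℝ → E} (hf : RdContinuousOn (tsTk T) f) :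
    IsDeltaAntideriv T f (tsH T a b f) := fun t ht =>
  tsH_deltaDiff h hf Subset.rfl ht (tsSigma_mem h.closed ht.1) (fun _ hx hx' => tsSigma_le hx hx')
    (fun hs => (hf t ht).1 (h.sigma_Tk ht hs))

lemma tsH_deltaDiff_Tk [CompleteSpace E] (h : TSS T a b) {f : ℝ → E} (hf : RdContinuousOn (tsTk T) f)
    {t : ℝ} (ht : t ∈ tsTk T) :
    deltaDiffAt (tsTk T) (tsH T a b f) t (f t) := by
  have hm := tsSigma_mem h.Tk_closed ht
  refine tsH_deltaDiff h hf h.Tk_sub ht (h.Tk_sub hm) ?_ (hf t ht).1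
  intro x hx hx'
  by_contra hc
  exact hc (tsSigma_le (h.Tk_lower hx hm (not_le.1 hc).le) hx')

end integ
section dbr

variable {T : Set ℝ} {a b : ℝ} {n : ℕ}

def tsK (T : Set ℝ) (a b : ℝ) (P : ℝ → En n) (s : ℝ) : En n := ∫ x in Ioi s, P x ∂(tsNu T a b)

lemma tsK_continuousAt {P : ℝ → En n} (hP : Integrable P (tsNu T a b)) {t : ℝ}
    (ht : tsNu T a b {t} = 0) : ContinuousAt (tsK T a b P) t := by
  have e : tsK T a b P = fun s => ∫ x, (Ioi s).indicator P x ∂(tsNu T a b) := by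
    funext s
    rw [integral_indicator measurableSet_Ioi, tsK]
  rw [e]
  refine tendsto_integral_filter_of_dominated_convergence (fun x => ‖P x‖) ?_ ?_ hP.norm ?_
  · exact Eventually.of_forall fun s => hP.aestronglyMeasurable.indicator measurableSet_Ioi
  · exact Eventually.of_forall fun s => ae_of_all _ fun x => norm_indicator_le_norm_self _ _
  · filter_upwards [measure_eq_zero_iff_ae_notMem.1 ht] with x hx
    have hx' : x ≠ t := hx
    refine tendsto_const_nhds.congr' ?_
    rcases lt_or_gt_of_ne hx' with h | h
    · filter_upwards [Ioi_mem_nhds h] with s hs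
      rw [indicator_of_notMem (by simpa using h.le), indicator_of_notMem]
      simpa using le_of_lt hs
    · filter_upwards [Iio_mem_nhds h] with s hs
      rw [indicator_of_mem (by simpa using h), indicator_of_mem]
      simpa using hs

lemma tsK_integrable {P : ℝ → En n} (hP : Integrable P (tsNu T a b)) :
    Integrable (tsK T a b P) (tsNu T a b) := by
  have e : tsK T a b P = fun s => ∫ x, ({p : ℝ × ℝ | p.1 < p.2}.indicator (fun p => P p.2)) (s, x)
      ∂(tsNu T a b) := by
    funext s
    rw [tsK, ← integral_indicator measurableSet_Ioi]
    rfl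
  rw [e]
  have h1 : Integrable (fun p : ℝ × ℝ => P p.2) ((tsNu T a b).prod (tsNu T a b)) := hP.comp_snd _
  exact (h1.indicator (measurableSet_lt measurable_fst measurable_snd)).integral_prod_left

lemma fubini_swap {P : ℝ → En n} (hP : Integrable P (tsNu T a b)) {φ : ℝ → En n}
    (hφ : Continuous φ) {C : ℝ} (hC : ∀ x, ‖φ x‖ ≤ C) :
    ∫ t, inner ℝ (P t) (tsH T a b φ t) ∂(tsNu T a b) =
      ∫ s, inner ℝ (tsK T a b P s) (φ s) ∂(tsNu T a b) := by
  set ν := tsNu T a b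
  have hφi : Integrable φ ν := Integrable.of_bound hφ.aestronglyMeasurable C (ae_of_all _ hC)
  let F : ℝ × ℝ → ℝ := {p : ℝ × ℝ | p.2 < p.1}.indicator (fun p => inner ℝ (P p.1) (φ p.2))
  have hP1 : Integrable (fun p : ℝ × ℝ => P p.1) (ν.prod ν) := hP.comp_fst _
  have hF : Integrable F (ν.prod ν) := by
    refine Integrable.indicator ?_ (measurableSet_lt measurable_snd measurable_fst)
    refine (hP1.norm.mul_const C).mono' ?_ ?_
    · exact hP1.aestronglyMeasurable.inner (hφ.comp continuous_snd).aestronglyMeasurable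
    · refine ae_of_all _ fun p => (norm_inner_le_norm _ _).trans ?_
      exact mul_le_mul_of_nonneg_left (hC _) (norm_nonneg _)
  have h1 : ∀ t, inner ℝ (P t) (tsH T a b φ t) = ∫ s, F (t, s) ∂ν := by
    intro t
    rw [tsH, ← integral_inner hφi.integrableOn, ← integral_indicator measurableSet_Iio]
    rfl
  have h2 : ∀ s, inner ℝ (tsK T a b P s) (φ s) = ∫ t, F (t, s) ∂ν := by
    intro s
    rw [tsK, real_inner_comm, ← integral_inner hP.integrableOn,
      ← integral_indicator measurableSet_Ioi]
    refine integral_congr_ae (ae_of_all _ fun t => ?_)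
    simp only [F, indicator, mem_Ioi, real_inner_comm]
    rfl
  simp_rw [h1, h2]
  exact integral_integral_swap (f := fun t s => F (t, s)) hF

lemma dbr (h : TSS T a b) {P Q : ℝ → En n} (hP : RdContinuousOn (tsTk T) P)
    (hQ : RdContinuousOn (tsTk T) Q)
    (hvar : ∀ φ : ℝ → En n, Continuous φ → (∃ C, ∀ x, ‖φ x‖ ≤ C) →
      ∫ x, φ x ∂(tsNu T a b) = 0 →
      ∫ t, (inner ℝ (P t) (tsH T a b φ t) + inner ℝ (Q t) (φ t)) ∂(tsNu T a b) = 0) :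
    ∃ c, ∀ t ∈ tsTk T, Q t - tsMu T t • P t = c + tsH T a b P t := by
  have hPi := rd_integrable h hP
  have hQi := rd_integrable h hQ
  have hKi := tsK_integrable hPi
  set ν := tsNu T a b with hν
  set f : ℝ → En n := fun t => tsK T a b P t + Q t with hf
  have hfi : Integrable f ν := hKi.add hQi
  have inner_int : ∀ (u φ : ℝ → En n), Integrable u ν → Continuous φ → (∃ C, ∀ x, ‖φ x‖ ≤ C) →
      Integrable (fun t => (inner ℝ (u t) (φ t) : ℝ)) ν := by
    rintro u φ hu hφ ⟨C, hC⟩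
    refine (hu.norm.mul_const C).mono' (hu.aestronglyMeasurable.inner hφ.aestronglyMeasurable) ?_
    refine ae_of_all _ fun p => (norm_inner_le_norm _ _).trans ?_
    exact mul_le_mul_of_nonneg_left (hC _) (norm_nonneg _)
  have hV : 0 < ν.real univ := by
    have h1 : ν.real (Ico a b) ≤ ν.real univ := measureReal_mono (subset_univ _)
    rw [hν, h.nu_real_Ico h.amem h.bmem h.lt.le] at h1
    have := h.lt
    linarith
  set V := ν.real univ with hVd
  have hvar' : ∀ φ : ℝ → En n, Continuous φ → (∃ C, ∀ x, ‖φ x‖ ≤ C) → ∫ x, φ x ∂ν = 0 →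
      ∫ t, (inner ℝ (f t) (φ t) : ℝ) ∂ν = 0 := by
    intro φ hφ hb h0
    have hv := hvar φ hφ hb h0
    obtain ⟨C, hC⟩ := hb
    have hHb : Integrable (fun t => (inner ℝ (P t) (tsH T a b φ t) : ℝ)) ν := by
      have hφi : Integrable φ ν := Integrable.of_bound hφ.aestronglyMeasurable C (ae_of_all _ hC)
      have hrd : RdContinuousOn (tsTk T) (tsH T a b φ) := by
        apply ContinuousOn.rd
        intro t ht
        have := tsH_antideriv h hφ.continuousOn.rd t ht
        exact (this.continuousWithinAt ht.1).mono h.Tk_sub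
      obtain ⟨M, hM0, hM⟩ := rd_bounded h.Tk_compact hrd
      refine (hPi.norm.mul_const M).mono'
        (hPi.aestronglyMeasurable.inner (rd_aesm h hrd)) ?_
      filter_upwards [h.nu_ae] with x hx
      exact (norm_inner_le_norm _ _).trans (mul_le_mul_of_nonneg_left (hM x hx.1) (norm_nonneg _))
    rw [integral_add hHb (inner_int Q φ hQi hφ ⟨C, hC⟩), fubini_swap hPi hφ hC] at hv
    rw [← hv, ← integral_add (inner_int _ φ hKi hφ ⟨C, hC⟩) (inner_int Q φ hQi hφ ⟨C, hC⟩)]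
    refine integral_congr_ae (ae_of_all _ fun t => ?_)
    simp only [hf, inner_add_left]
  set c : En n := V⁻¹ • ∫ x, f x ∂ν with hc
  have hmean : ∫ x, (f x - c) ∂ν = 0 := by
    rw [integral_sub hfi (integrable_const _), integral_const, hc, smul_smul, ← hVd,
      mul_inv_cancel₀ hV.ne', one_smul, sub_self]
  have hfc : Integrable (fun x => f x - c) ν := hfi.sub (integrable_const _)
  have hae : ∀ᵐ x ∂ν, f x - c = 0 := by
    refine ae_eq_zero_of_integral_contDiff_smul_eq_zero hfc.locallyIntegrable fun g hg hgs => ?_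
    have hgc := hg.continuous
    obtain ⟨C, hC⟩ := hgc.bounded_above_of_compact_support hgs
    have hgi : Integrable g ν := Integrable.of_bound hgc.aestronglyMeasurable C (ae_of_all _ hC)
    have hgfi : Integrable (fun x => g x • (f x - c)) ν :=
      hfc.bdd_smul C hgc.aestronglyMeasurable (ae_of_all _ hC)
    refine ext_inner_left ℝ fun e => ?_
    rw [← integral_inner hgfi, inner_zero_right]
    set gb := V⁻¹ * ∫ x, g x ∂ν with hgb
    set φ : ℝ → En n := fun x => (g x - gb) • e with hφ
    have hφc : Continuous φ := (hgc.sub continuous_const).smul continuous_const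
    have hφb : ∃ C, ∀ x, ‖φ x‖ ≤ C := by
      refine ⟨(C + |gb|) * ‖e‖, fun x => ?_⟩
      rw [hφ]
      simp only [norm_smul]
      refine mul_le_mul_of_nonneg_right ?_ (norm_nonneg _)
      exact (norm_sub_le _ _).trans (add_le_add (hC x) le_rfl)
    have hφ0 : ∫ x, φ x ∂ν = 0 := by
      rw [hφ, integral_smul_const, integral_sub hgi (integrable_const _), integral_const, hgb,
        smul_eq_mul, ← mul_assoc, ← hVd, mul_inv_cancel₀ hV.ne', one_mul, sub_self, zero_smul]
    have hφi : Integrable φ ν := by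
      obtain ⟨C, hC⟩ := hφb
      exact Integrable.of_bound hφc.aestronglyMeasurable C (ae_of_all _ hC)
    have i1 := hvar' φ hφc hφb hφ0
    have i2 : ∫ x, (inner ℝ c (φ x) : ℝ) ∂ν = 0 := by
      rw [integral_inner hφi, hφ0, inner_zero_right]
    have i3 : ∫ x, (inner ℝ (gb • e) (f x - c) : ℝ) ∂ν = 0 := by
      rw [integral_inner hfc, hmean, inner_zero_right]
    have j1 := inner_int f φ hfi hφc hφb
    have j2 := inner_int (fun _ => c) φ (integrable_const _) hφc hφb
    have j3 : Integrable (fun x => (inner ℝ (gb • e) (f x - c) : ℝ)) ν := hfc.const_inner _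
    have : ∀ x, (inner ℝ e (g x • (f x - c)) : ℝ) =
        (inner ℝ (f x) (φ x) - inner ℝ c (φ x)) + inner ℝ (gb • e) (f x - c) := by
      intro x
      simp only [hφ, inner_smul_right, inner_smul_left, inner_sub_right, real_inner_comm,
        inner_sub_left, RCLike.conj_to_real]
      ring
    simp_rw [this]
    have j12 : Integrable (fun x => (inner ℝ (f x) (φ x) - inner ℝ c (φ x) : ℝ)) ν := j1.sub j2
    rw [integral_add j12 j3, integral_sub j1 j2, i1, i2, i3]
    simp
  have hpt : ∀ t ∈ tsTk T, f t = c := by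
    intro t ht
    by_contra hne
    by_cases hs : tsSigma T t = t
    · have hz : ν {t} = 0 := by
        rw [hν, h.nu_singleton ht.1 ht, tsMu, hs]; simp
      have hcont : ContinuousWithinAt f (tsTk T) t :=
        (tsK_continuousAt hPi hz).continuousWithinAt.add ((hQ t ht).1 (h.sigma_Tk ht hs))
      have hev : ∀ᶠ x in 𝓝[tsTk T] t, f x ≠ c := hcont.eventually_ne hne
      rw [eventually_nhdsWithin_iff, Metric.eventually_nhds_iff] at hev
      obtain ⟨δ, hδ, H⟩ := hev
      have key : ∀ x ∈ T, ∀ y ∈ T, x < y → t - δ < x → y < t + δ → False := by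
        intro x hx y hy hxy h1 h2
        have hz : ν (Ico x y) = 0 := by
          refine measure_eq_zero_iff_ae_notMem.2 ?_
          filter_upwards [h.nu_ae, hae] with z hz hz' hz''
          refine H (y := z) ?_ hz.1 (sub_eq_zero.1 hz')
          rw [Real.dist_eq, abs_lt]
          have := hz''.1
          have := hz''.2
          constructor <;> linarith
        rw [hν, h.nu_Ico hx hy, ENNReal.ofReal_eq_zero] at hz
        linarith
      rcases lt_or_eq_of_le (h.sub ht.1).2 with hb | hb
      · have hne : ({s | s ∈ T ∧ t < s}).Nonempty := ⟨b, h.bmem, hb⟩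
        have hi : tsSigma T t = sInf {s | s ∈ T ∧ t < s} := by unfold tsSigma; rw [if_pos hne]
        have : sInf {s | s ∈ T ∧ t < s} < t + δ := by rw [← hi, hs]; linarith
        obtain ⟨x, hx, hx'⟩ := exists_lt_of_csInf_lt hne this
        exact key t ht.1 x hx.1 hx.2 (by linarith) hx'
      · have hr : tsRho T b = b := by
          rw [h.Tk_eq] at ht
          refine le_antisymm (tsRho_le _ _) ?_
          have := ht.2
          rw [hb] at this
          exact this
        have hne : ({s | s ∈ T ∧ s < b}).Nonempty := ⟨a, h.amem, h.lt⟩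
        have hi : tsRho T b = sSup {s | s ∈ T ∧ s < b} := by unfold tsRho; rw [if_pos hne]
        have : b - δ < sSup {s | s ∈ T ∧ s < b} := by rw [← hi, hr]; linarith
        obtain ⟨x, hx, hx'⟩ := exists_lt_of_lt_csSup hne this
        exact key x hx.1 b h.bmem hx.2 (by linarith) (by linarith)
    · have hlt : t < tsSigma T t := lt_of_le_of_ne (tsSigma_ge _ _) (Ne.symm hs)
      have hz : ν {t} = 0 := by
        refine measure_eq_zero_iff_ae_notMem.2 ?_
        filter_upwards [hae] with z hz hz'
        rw [mem_singleton_iff.1 hz'] at hz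
        exact hne (sub_eq_zero.1 hz)
      rw [hν, h.nu_singleton ht.1 ht, ENNReal.ofReal_eq_zero, tsMu] at hz
      linarith
  refine ⟨c - ∫ x, P x ∂ν, fun t ht => ?_⟩
  have h1 := hpt t ht
  have h2 : ∫ x, P x ∂ν = tsH T a b P t + ∫ x in Ici t, P x ∂ν := by
    rw [tsH, ← integral_add_compl measurableSet_Iio hPi, compl_Iio]
  have h3 : ∫ x in Ici t, P x ∂ν = tsMu T t • P t + tsK T a b P t := by
    have e : Ici t = {t} ∪ Ioi t := by
      ext x; simp only [mem_Ici, mem_union, mem_singleton_iff, mem_Ioi]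
      rw [le_iff_eq_or_lt, eq_comm]
    rw [e, setIntegral_union (by simp) measurableSet_Ioi hPi.integrableOn hPi.integrableOn,
      integral_singleton, Measure.real, hν, h.nu_singleton ht.1 ht, ENNReal.toReal_ofReal, tsK]
    unfold tsMu
    linarith [tsSigma_ge T t]
  rw [h2, h3, ← h1, hf]
  simp only
  abel

end dbr
section main

variable {T : Set ℝ} {a b : ℝ} {n : ℕ}

lemma hasDerivAt_L {l : En n → En n → ℝ} (hl : ContDiff ℝ 2 (fun p : En n × En n => l p.1 p.2))
    {ly lv : En n → En n → En n}
    (hly : ∀ y v : En n, HasGradientAt (fun z => l z v) (ly y v) y)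
    (hlv : ∀ y v : En n, HasGradientAt (fun z => l y z) (lv y v) v)
    (y v η φ : En n) (ε : ℝ) :
    HasDerivAt (fun ε : ℝ => l (y + ε • η) (v + ε • φ))
      (inner ℝ (ly (y + ε • η) (v + ε • φ)) η + inner ℝ (lv (y + ε • η) (v + ε • φ)) φ) ε := by
  set y' := y + ε • η
  set v' := v + ε • φ
  have hd : HasFDerivAt (fun p : En n × En n => l p.1 p.2)
      (fderiv ℝ (fun p : En n × En n => l p.1 p.2) (y', v')) (y', v') :=
    (hl.differentiable (by norm_num) _).hasFDerivAt
  set D := fderiv ℝ (fun p : En n × En n => l p.1 p.2) (y', v')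
  have h1 : D (η, 0) = inner ℝ (ly y' v') η := by
    have k : HasFDerivAt (fun z : En n => (z, v')) (ContinuousLinearMap.inl ℝ (En n) (En n)) y' :=
      hasFDerivAt_prodMk_left y' v'
    have k2 := HasFDerivAt.comp (f := fun z : En n => (z, v')) y' hd k
    have k3 := k2.unique (hasGradientAt_iff_hasFDerivAt.1 (hly y' v'))
    have := DFunLike.congr_fun k3 η
    simpa using this
  have h2 : D (0, φ) = inner ℝ (lv y' v') φ := by
    have k : HasFDerivAt (fun z : En n => (y', z)) (ContinuousLinearMap.inr ℝ (En n) (En n)) v' :=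
      hasFDerivAt_prodMk_right y' v'
    have k2 := HasFDerivAt.comp (f := fun z : En n => (y', z)) v' hd k
    have k3 := k2.unique (hasGradientAt_iff_hasFDerivAt.1 (hlv y' v'))
    have := DFunLike.congr_fun k3 φ
    simpa using this
  have hcurve : HasDerivAt (fun ε : ℝ => (y + ε • η, v + ε • φ)) (η, φ) ε := by
    have e1 : HasDerivAt (fun ε : ℝ => y + ε • η) η ε := by
      simpa using ((hasDerivAt_id ε).smul_const η).const_add y
    have e2 : HasDerivAt (fun ε : ℝ => v + ε • φ) φ ε := by
      simpa using ((hasDerivAt_id ε).smul_const φ).const_add v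
    exact e1.prodMk e2
  have := HasFDerivAt.comp_hasDerivAt (f := fun ε : ℝ => (y + ε • η, v + ε • φ)) ε hd hcurve
  rw [← h1, ← h2, ← map_add]
  have e3 : ((η, 0) + (0, φ) : En n × En n) = (η, φ) := by simp
  rw [e3]
  exact this

lemma bdd_on {X : Type*} [NormedAddCommGroup X] (hT : IsCompact T) {Φ : ℝ → En n → En n → X}
    (hΦ : ContinuousOn (fun p : ℝ × En n × En n => Φ p.1 p.2.1 p.2.2)
      (T ×ˢ (univ : Set (En n × En n)))) (R₁ R₂ : ℝ) :
    ∃ C, ∀ t ∈ T, ∀ y v : En n, ‖y‖ ≤ R₁ → ‖v‖ ≤ R₂ → ‖Φ t y v‖ ≤ C := by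
  have hc : IsCompact (T ×ˢ (Metric.closedBall (0 : En n) R₁ ×ˢ Metric.closedBall (0 : En n) R₂)) :=
    hT.prod ((isCompact_closedBall _ _).prod (isCompact_closedBall _ _))
  obtain ⟨C, hC⟩ := hc.exists_bound_of_continuousOn
    (hΦ.mono (prod_mono Subset.rfl (subset_univ _)))
  refine ⟨C, fun t ht y v hy hv => hC (t, y, v) ⟨ht, ?_, ?_⟩⟩
  · simpa using hy
  · simpa using hv

lemma supNorm_le {S : Set ℝ} {f : ℝ → En n} {M : ℝ} (hM : 0 ≤ M) (h : ∀ t ∈ S, ‖f t‖ ≤ M) :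
    tsSupNorm S f ≤ M := by
  unfold tsSupNorm
  refine Real.sSup_le ?_ hM
  rintro _ ⟨t, ht, rfl⟩
  exact h t ht

lemma first_variation (h : TSS T a b)
    (L : ℝ → En n → En n → ℝ) (Ly Lv : ℝ → En n → En n → En n)
    (hLc : ContinuousOn (fun p : ℝ × En n × En n => L p.1 p.2.1 p.2.2)
      (T ×ˢ (univ : Set (En n × En n))))
    (hLC2 : ∀ t ∈ T, ContDiff ℝ 2 (fun p : En n × En n => L t p.1 p.2))
    (hLy : ∀ t ∈ T, ∀ y v : En n, HasGradientAt (fun z => L t z v) (Ly t y v) y)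
    (hLv : ∀ t ∈ T, ∀ y v : En n, HasGradientAt (fun z => L t y z) (Lv t y v) v)
    (hLyc : ContinuousOn (fun p : ℝ × En n × En n => Ly p.1 p.2.1 p.2.2)
      (T ×ˢ (univ : Set (En n × En n))))
    (hLvc : ContinuousOn (fun p : ℝ × En n × En n => Lv p.1 p.2.1 p.2.2)
      (T ×ˢ (univ : Set (En n × En n))))
    (ys yds : ℝ → En n) (hys : C1rd T ys yds)
    (hmin : ∃ δ > 0, ∀ y yd : ℝ → En n, C1rd T y yd →
      y a = ys a → y b = ys b →
      tsSupNorm (tsTk T) (fun t => y t - ys t)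
        + tsSupNorm (tsTk T) (fun t => yd t - yds t) < δ →
      ∀ F G : ℝ → ℝ,
        IsDeltaAntideriv T (fun t => L t (ys t) (yds t)) F →
        IsDeltaAntideriv T (fun t => L t (y t) (yd t)) G →
        F b - F a ≤ G b - G a)
    (φ : ℝ → En n) (hφ : Continuous φ) (hφb : ∃ C, ∀ x, ‖φ x‖ ≤ C)
    (hφ0 : ∫ x, φ x ∂(tsNu T a b) = 0) :
    ∫ t, (inner ℝ (Ly t (ys t) (yds t)) (tsH T a b φ t) + inner ℝ (Lv t (ys t) (yds t)) (φ t))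
      ∂(tsNu T a b) = 0 := by
  set ν := tsNu T a b with hν
  set η := tsH T a b φ with hη
  have hTc : IsCompact T := isCompact_Icc.of_isClosed_subset h.closed h.sub
  have hφrd : RdContinuousOn (tsTk T) φ := hφ.continuousOn.rd
  have hηd : IsDeltaAntideriv T φ η := tsH_antideriv h hφrd
  have hηc : ContinuousOn η (tsTk T) := fun t ht =>
    ((hηd t ht).continuousWithinAt ht.1).mono h.Tk_sub
  have hyc : ContinuousOn ys (tsTk T) := fun t ht =>
    ((hys.1 t ht).continuousWithinAt ht.1).mono h.Tk_sub
  have hηa : η a = 0 := tsH_a h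
  have hηb : η b = 0 := by rw [hη, tsH_b h, hφ0]
  obtain ⟨Mφ, hφ0', hMφ⟩ := rd_bounded h.Tk_compact hφrd
  obtain ⟨Mη, hη0, hMη⟩ := rd_bounded h.Tk_compact hηc.rd
  obtain ⟨My, hy0, hMy⟩ := rd_bounded h.Tk_compact hyc.rd
  obtain ⟨Md, hd0, hMd⟩ := rd_bounded h.Tk_compact hys.2
  have hyε : ∀ ε : ℝ, ContinuousOn (fun t => ys t + ε • η t) (tsTk T) := fun ε =>
    hyc.add (hηc.const_smul ε)
  have hydε : ∀ ε : ℝ, RdContinuousOn (tsTk T) (fun t => yds t + ε • φ t) := fun ε =>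
    hys.2.add_smul hφrd ε
  have hΦ : ∀ ε : ℝ, RdContinuousOn (tsTk T)
      (fun t => L t (ys t + ε • η t) (yds t + ε • φ t)) := fun ε =>
    rd_comp h.Tk_sub hLc (hyε ε) (hydε ε)
  have hP : RdContinuousOn (tsTk T) (fun t => Ly t (ys t) (yds t)) :=
    rd_comp h.Tk_sub hLyc hyc hys.2
  have hQ : RdContinuousOn (tsTk T) (fun t => Lv t (ys t) (yds t)) :=
    rd_comp h.Tk_sub hLvc hyc hys.2
  obtain ⟨C₁, hC₁⟩ := bdd_on hTc hLyc (My + Mη) (Md + Mφ)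
  obtain ⟨C₂, hC₂⟩ := bdd_on hTc hLvc (My + Mη) (Md + Mφ)
  set J : ℝ → ℝ := fun ε => ∫ t, L t (ys t + ε • η t) (yds t + ε • φ t) ∂ν with hJ
  have hderiv : HasDerivAt J (∫ t, (inner ℝ (Ly t (ys t + (0:ℝ) • η t) (yds t + (0:ℝ) • φ t)) (η t) +
      inner ℝ (Lv t (ys t + (0:ℝ) • η t) (yds t + (0:ℝ) • φ t)) (φ t)) ∂ν) 0 := by
    refine (hasDerivAt_integral_of_dominated_loc_of_deriv_le (μ := ν) (s := Metric.ball (0 : ℝ) 1)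
      (F := fun ε t => L t (ys t + ε • η t) (yds t + ε • φ t))
      (F' := fun ε t => (inner ℝ (Ly t (ys t + ε • η t) (yds t + ε • φ t)) (η t) +
        inner ℝ (Lv t (ys t + ε • η t) (yds t + ε • φ t)) (φ t) : ℝ))
      (bound := fun _ => C₁ * Mη + C₂ * Mφ)
      (Metric.ball_mem_nhds _ one_pos) ?_ ?_ ?_ ?_ (integrable_const _) ?_).2
    · exact Eventually.of_forall fun ε => rd_aesm h (hΦ ε)
    · exact rd_integrable h (hΦ 0)
    · simp only [zero_smul, add_zero]
      exact ((rd_aesm h hP).inner (rd_aesm h hηc.rd)).add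
        ((rd_aesm h hQ).inner hφ.aestronglyMeasurable)
    · filter_upwards [h.nu_ae] with t ht ε hε
      have hε' : |ε| ≤ 1 := by
        have : ‖ε‖ < 1 := by simpa using hε
        exact this.le
      have b1 : ‖ys t + ε • η t‖ ≤ My + Mη := by
        refine (norm_add_le _ _).trans (add_le_add (hMy t ht.1) ?_)
        rw [norm_smul, Real.norm_eq_abs]
        have := hMη t ht.1
        nlinarith [norm_nonneg (η t), abs_nonneg ε]
      have b2 : ‖yds t + ε • φ t‖ ≤ Md + Mφ := by
        refine (norm_add_le _ _).trans (add_le_add (hMd t ht.1) ?_)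
        rw [norm_smul, Real.norm_eq_abs]
        have := hMφ t ht.1
        nlinarith [norm_nonneg (φ t), abs_nonneg ε]
      have k1 := hC₁ t ht.1.1 _ _ b1 b2
      have k2 := hC₂ t ht.1.1 _ _ b1 b2
      refine (norm_add_le _ _).trans (add_le_add ?_ ?_)
      · exact (norm_inner_le_norm _ _).trans
          (mul_le_mul k1 (hMη t ht.1) (norm_nonneg _) ((norm_nonneg _).trans k1))
      · exact (norm_inner_le_norm _ _).trans
          (mul_le_mul k2 (hMφ t ht.1) (norm_nonneg _) ((norm_nonneg _).trans k2))
    · filter_upwards [h.nu_ae] with t ht ε hε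
      exact hasDerivAt_L (hLC2 t ht.1.1) (hLy t ht.1.1) (hLv t ht.1.1) _ _ _ _ ε
  have hloc : IsLocalMin J 0 := by
    obtain ⟨δ, hδ, H⟩ := hmin
    have hpos : 0 < Mη + Mφ + 1 := by linarith
    filter_upwards [Metric.ball_mem_nhds (0 : ℝ) (show 0 < δ / (Mη + Mφ + 1) by positivity)]
      with ε hε
    have hε' : |ε| < δ / (Mη + Mφ + 1) := by simpa using hε
    rw [lt_div_iff₀ hpos] at hε'
    have hC1 : C1rd T (fun t => ys t + ε • η t) (fun t => yds t + ε • φ t) :=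
      ⟨fun t ht => (hys.1 t ht).add_smul (hηd t ht) ε, hydε ε⟩
    have n1 : tsSupNorm (tsTk T) (fun t => ys t + ε • η t - ys t) ≤ |ε| * Mη := by
      refine supNorm_le (by positivity) fun t ht => ?_
      rw [add_sub_cancel_left, norm_smul, Real.norm_eq_abs]
      exact mul_le_mul_of_nonneg_left (hMη t ht) (abs_nonneg _)
    have n2 : tsSupNorm (tsTk T) (fun t => yds t + ε • φ t - yds t) ≤ |ε| * Mφ := by
      refine supNorm_le (by positivity) fun t ht => ?_
      rw [add_sub_cancel_left, norm_smul, Real.norm_eq_abs]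
      exact mul_le_mul_of_nonneg_left (hMφ t ht) (abs_nonneg _)
    have hΦ0 : RdContinuousOn (tsTk T) (fun t => L t (ys t) (yds t)) :=
      rd_comp h.Tk_sub hLc hyc hys.2
    have := H _ _ hC1 (by simp [hηa]) (by simp [hηb])
      (by nlinarith [abs_nonneg ε]) _ _ (tsH_antideriv h hΦ0) (tsH_antideriv h (hΦ ε))
    rw [tsH_a h, tsH_a h, tsH_b h, tsH_b h, sub_zero, sub_zero] at this
    simpa [hJ] using this
  have := hloc.hasDerivAt_eq_zero hderiv
  simpa using this

end main

theorem euler_lagrange_delta_differentiated_form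
    {n : ℕ} (hn : 1 ≤ n)
    (T₀ : Set ℝ) (hT₀closed : IsClosed T₀)
    (a b : ℝ) (ha : a ∈ T₀) (hb : b ∈ T₀) (hab : a < b)
    (T : Set ℝ) (hT : T = Icc a b ∩ T₀)
    (hT3 : ∃ c ∈ T, c ≠ a ∧ c ≠ b)
    (L : ℝ → En n → En n → ℝ) (Ly Lv : ℝ → En n → En n → En n)
    (hLc : ContinuousOn (fun p : ℝ × En n × En n => L p.1 p.2.1 p.2.2)
      (T ×ˢ (univ : Set (En n × En n))))
    (hLC2 : ∀ t ∈ T, ContDiff ℝ 2 (fun p : En n × En n => L t p.1 p.2))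
    (hLy : ∀ t ∈ T, ∀ y v : En n, HasGradientAt (fun z => L t z v) (Ly t y v) y)
    (hLv : ∀ t ∈ T, ∀ y v : En n, HasGradientAt (fun z => L t y z) (Lv t y v) v)
    (hLyc : ContinuousOn (fun p : ℝ × En n × En n => Ly p.1 p.2.1 p.2.2)
      (T ×ˢ (univ : Set (En n × En n))))
    (hLvc : ContinuousOn (fun p : ℝ × En n × En n => Lv p.1 p.2.1 p.2.2)
      (T ×ˢ (univ : Set (En n × En n))))
    (ys yds : ℝ → En n) (hys : C1rd T ys yds)
    (hmin : ∃ δ > 0, ∀ y yd : ℝ → En n, C1rd T y yd →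
      y a = ys a → y b = ys b →
      tsSupNorm (tsTk T) (fun t => y t - ys t)
        + tsSupNorm (tsTk T) (fun t => yd t - yds t) < δ →
      ∀ F G : ℝ → ℝ,
        IsDeltaAntideriv T (fun t => L t (ys t) (yds t)) F →
        IsDeltaAntideriv T (fun t => L t (y t) (yd t)) G →
        F b - F a ≤ G b - G a) :
    ∀ t ∈ tsTk (tsTk T), deltaDiffAt (tsTk T)
      (fun s => Lv s (ys s) (yds s) - tsMu T s • Ly s (ys s) (yds s)) t
      (Ly t (ys t) (yds t)) := by
  have h : TSS T a b := by
    subst hT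
    exact ⟨isClosed_Icc.inter hT₀closed, ⟨⟨le_rfl, hab.le⟩, ha⟩, ⟨⟨hab.le, le_rfl⟩, hb⟩,
      inter_subset_left, hab⟩
  have hyc : ContinuousOn ys (tsTk T) := fun t ht =>
    ((hys.1 t ht).continuousWithinAt ht.1).mono h.Tk_sub
  have hP : RdContinuousOn (tsTk T) (fun t => Ly t (ys t) (yds t)) :=
    rd_comp h.Tk_sub hLyc hyc hys.2
  have hQ : RdContinuousOn (tsTk T) (fun t => Lv t (ys t) (yds t)) :=
    rd_comp h.Tk_sub hLvc hyc hys.2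
  obtain ⟨c, hc⟩ := dbr h hP hQ (fun φ h1 h2 h3 => first_variation h L Ly Lv hLc hLC2 hLy hLv
    hLyc hLvc ys yds hys hmin φ h1 h2 h3)
  intro t ht ε hε
  have htS : t ∈ tsTk T := ht.1
  obtain ⟨δ, hδ, H⟩ := tsH_deltaDiff_Tk h hP htS ε hε
  refine ⟨δ, hδ, fun s hs => ?_⟩
  have := H s hs
  simp only
  rw [hc s hs.1, hc _ (tsSigma_mem h.Tk_closed htS), add_sub_add_left_eq_sub]
  exact this
end
end

section
/- Suppose y* ∈ C¹_rd(𝕋;ℝⁿ) is a weak local minimizer of the sigma-form functional 𝓛σ[y] = ∫_a^b L(t, y(σ(t)), y^Δ(t)) Δt with the left endpoint free: there is δ > 0 such that 𝓛σ[y*] ≤ 𝓛σ[y] for every y ∈ C¹_rd(𝕋;ℝⁿ) with y(b) = y*(b) and ‖y − y*‖_{1,∞} < δ (no condition at t = a). Then the transversality condition L_v(a, y*(σ(a)), y*^Δ(a)) = 0 holds. -/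
open Set Filter

noncomputable section

open scoped Topology
open MeasureTheory

structure TS (T : Set ℝ) (a b : ℝ) : Prop where
  closed : IsClosed T
  ha : a ∈ T
  hb : b ∈ T
  sub : T ⊆ Icc a b
  hab : a < b

namespace TS

variable {T : Set ℝ} {a b : ℝ}

lemma sigma_b (h : TS T a b) : tsSigma T b = b := by
  unfold tsSigma
  rw [if_neg]
  rintro ⟨s, hs, hbs⟩
  exact absurd (h.sub hs).2 (not_le.2 hbs)

lemma sigma_props (h : TS T a b) {t : ℝ} (ht : t ∈ T) (htb : t < b) :
    tsSigma T t ∈ T ∧ t ≤ tsSigma T t ∧ ∀ s ∈ T, t < s → tsSigma T t ≤ s := by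
  have hne : ({s | s ∈ T ∧ t < s}).Nonempty := ⟨b, h.hb, htb⟩
  have hbd : BddBelow {s | s ∈ T ∧ t < s} := ⟨t, fun s hs => hs.2.le⟩
  unfold tsSigma
  rw [if_pos hne]
  refine ⟨?_, le_csInf hne fun s hs => hs.2.le, fun s hs hts => csInf_le hbd ⟨hs, hts⟩⟩
  have h1 := csInf_mem_closure hne hbd
  have h2 : closure {s | s ∈ T ∧ t < s} ⊆ T := closure_minimal (fun s hs => hs.1) h.closed
  exact h2 h1

lemma sigma_mem (h : TS T a b) {t : ℝ} (ht : t ∈ T) : tsSigma T t ∈ T := by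
  rcases (h.sub ht).2.lt_or_eq with h1 | h1
  · exact (h.sigma_props ht h1).1
  · rw [h1, h.sigma_b]; exact h.hb

lemma le_sigma (h : TS T a b) {t : ℝ} (ht : t ∈ T) : t ≤ tsSigma T t := by
  rcases (h.sub ht).2.lt_or_eq with h1 | h1
  · exact (h.sigma_props ht h1).2.1
  · rw [h1, h.sigma_b]

lemma sigma_le (h : TS T a b) {t s : ℝ} (ht : t ∈ T) (hs : s ∈ T) (hts : t < s) :
    tsSigma T t ≤ s :=
  (h.sigma_props ht (hts.trans_le (h.sub hs).2)).2.2 s hs hts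

lemma sSup_eq (h : TS T a b) : sSup T = b :=
  IsGreatest.csSup_eq ⟨h.hb, fun s hs => (h.sub hs).2⟩

lemma le_rho (h : TS T a b) {t : ℝ} (ht : t ∈ T) (htb : t < b) : t ≤ tsRho T b := by
  have hne : ({s | s ∈ T ∧ s < b}).Nonempty := ⟨t, ht, htb⟩
  unfold tsRho
  rw [if_pos hne]
  exact le_csSup ⟨b, fun s hs => hs.2.le⟩ ⟨ht, htb⟩

lemma tk_eq (h : TS T a b) : tsTk T = T ∩ Iic (tsRho T b) := by
  ext t
  simp only [tsTk, h.sSup_eq, Set.mem_sdiff, mem_Ioc, mem_inter_iff, mem_Iic, not_and, not_le]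
  constructor
  · rintro ⟨h1, h2⟩
    refine ⟨h1, ?_⟩
    by_contra h3
    exact absurd (h2 (not_le.1 h3)) (not_lt.2 (h.sub h1).2)
  · rintro ⟨h1, h2⟩
    exact ⟨h1, fun h3 => absurd h2 (not_le.2 h3)⟩

lemma tk_sub (h : TS T a b) : tsTk T ⊆ T := fun _ ht => ht.1

lemma mem_tk (h : TS T a b) {t : ℝ} (ht : t ∈ T) (htb : t < b) : t ∈ tsTk T := by
  rw [h.tk_eq]; exact ⟨ht, h.le_rho ht htb⟩

lemma a_mem_tk (h : TS T a b) : a ∈ tsTk T := h.mem_tk h.ha h.hab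

lemma tk_compact (h : TS T a b) : IsCompact (tsTk T) := by
  rw [h.tk_eq]
  exact (isCompact_Icc.of_isClosed_subset h.closed h.sub).inter_right isClosed_Iic

/-- right-dense points: approximated from the right -/
lemma exists_right (h : TS T a b) {t : ℝ} (ht : t ∈ T) (htb : t < b) (hd : tsSigma T t = t)
    {u : ℝ} (hu : t < u) : ∃ s ∈ T, t < s ∧ s < u := by
  have hne : ({s | s ∈ T ∧ t < s}).Nonempty := ⟨b, h.hb, htb⟩
  unfold tsSigma at hd
  rw [if_pos hne] at hd
  obtain ⟨s, hs, hsu⟩ := exists_lt_of_csInf_lt hne (hd.trans_lt hu)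
  exact ⟨s, hs.1, hs.2, hsu⟩

lemma sigma_cont (h : TS T a b) {t : ℝ} (ht : t ∈ T) (hd : tsSigma T t = t) :
    Tendsto (tsSigma T) (𝓝[T] t) (𝓝[T] t) := by
  refine tendsto_nhdsWithin_iff.2 ⟨?_, eventually_mem_nhdsWithin.mono fun s hs => h.sigma_mem hs⟩
  rw [Metric.tendsto_nhdsWithin_nhds]
  intro ε hε
  rcases (h.sub ht).2.lt_or_eq with h1 | h1
  · obtain ⟨u, hu, htu, hue⟩ := h.exists_right ht h1 hd (show t < t + ε by linarith)
    refine ⟨min ε (u - t), lt_min hε (by linarith), fun {s} hs hst => ?_⟩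
    rw [Real.dist_eq, abs_lt] at hst ⊢
    have := min_le_left ε (u - t)
    have := min_le_right ε (u - t)
    have h2 := h.le_sigma hs
    have h3 := h.sigma_le hs hu (by linarith)
    constructor <;> linarith
  · refine ⟨ε, hε, fun {s} hs hst => ?_⟩
    rw [Real.dist_eq, abs_lt] at hst ⊢
    have h2 := h.le_sigma hs
    have h3 := (h.sub (h.sigma_mem hs)).2
    constructor <;> linarith

lemma sigma_left (h : TS T a b) {t : ℝ} (ht : t ∈ T) :
    Tendsto (tsSigma T) (𝓝[T ∩ Iio t] t) (𝓝[T] t) := by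
  refine tendsto_nhdsWithin_iff.2 ⟨?_, eventually_mem_nhdsWithin.mono fun s hs => h.sigma_mem hs.1⟩
  refine tendsto_of_tendsto_of_tendsto_of_le_of_le' (g := id) (h := fun _ => t)
    (tendsto_id.mono_left nhdsWithin_le_nhds) tendsto_const_nhds ?_ ?_
  · exact eventually_mem_nhdsWithin.mono fun s hs => h.le_sigma hs.1
  · exact eventually_mem_nhdsWithin.mono fun s hs => h.sigma_le hs.1 ht hs.2

lemma cont_of_delta {E : Type*} [NormedAddCommGroup E] [NormedSpace ℝ E] (h : TS T a b)
    {f : ℝ → E} {t : ℝ} {d : E} (ht : t ∈ T) (hf : deltaDiffAt T f t d) :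
    ContinuousWithinAt f T t := by
  rw [Metric.continuousWithinAt_iff]
  intro ε hε
  set m := |tsSigma T t - t|
  have hm : 0 ≤ m := abs_nonneg _
  obtain ⟨δ, hδ, H⟩ := hf (ε / (4 * (m + 1))) (by positivity)
  refine ⟨min δ (min 1 (ε / (4 * (‖d‖ + 1)))), by positivity, fun {s} hs hst => ?_⟩
  rw [Real.dist_eq] at hst
  have hst1 : |s - t| < δ := hst.trans_le (min_le_left _ _)
  have hst2 : |s - t| < 1 := hst.trans_le ((min_le_right _ _).trans (min_le_left _ _))
  have hst3 : |s - t| < ε / (4 * (‖d‖ + 1)) :=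
    hst.trans_le ((min_le_right _ _).trans (min_le_right _ _))
  have h1 := H s ⟨hs, by rw [abs_lt] at hst1; constructor <;> linarith⟩
  have h2 := H t ⟨ht, by constructor <;> linarith⟩
  have h3 : |tsSigma T t - s| ≤ m + 1 := by
    calc |tsSigma T t - s| = |(tsSigma T t - t) + (t - s)| := by ring_nf
      _ ≤ m + |t - s| := abs_add_le _ _
      _ ≤ m + 1 := by rw [abs_sub_comm t s]; linarith
  have e : f s - f t = (f (tsSigma T t) - f t - (tsSigma T t - t) • d)
      - (f (tsSigma T t) - f s - (tsSigma T t - s) • d) + (s - t) • d := by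
    module
  have k : ε / (4 * (m + 1)) * (m + 1) = ε / 4 := by field_simp
  have k' : ε / (4 * (‖d‖ + 1)) * (‖d‖ + 1) = ε / 4 := by field_simp
  have q : 0 < ε / (4 * (m + 1)) := by positivity
  have n1 : ‖f (tsSigma T t) - f t - (tsSigma T t - t) • d‖ ≤ ε / 4 := by
    rw [← k]; exact h2.trans (mul_le_mul_of_nonneg_left (by change m ≤ m + 1; linarith) q.le)
  have n2 : ‖f (tsSigma T t) - f s - (tsSigma T t - s) • d‖ ≤ ε / 4 := by
    rw [← k]; exact h1.trans (mul_le_mul_of_nonneg_left h3 q.le)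
  have n3 : ‖(s - t) • d‖ ≤ ε / 4 := by
    rw [norm_smul, Real.norm_eq_abs, ← k']
    apply mul_le_mul hst3.le (by linarith) (norm_nonneg _) (by positivity)
  rw [dist_eq_norm, e]
  calc _ ≤ _ := norm_add_le _ _
    _ ≤ (_ + _) + _ := add_le_add_left (norm_sub_le _ _) _
    _ < ε := by linarith

end TS

/-- working notion of rd-continuity -/
def NR {E : Type*} [NormedAddCommGroup E] (T : Set ℝ) (f : ℝ → E) : Prop :=
  ∀ t ∈ tsTk T, (tsSigma T t = t → ContinuousWithinAt f (tsTk T) t) ∧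
    ∃ l : E, Tendsto f (𝓝[tsTk T ∩ Iio t] t) (𝓝 l)

namespace TS

variable {T : Set ℝ} {a b : ℝ} 

lemma sigma_tk (h : TS T a b) {t : ℝ} (ht : t ∈ tsTk T) (hd : tsSigma T t = t) :
    tsSigma (tsTk T) t = t := by
  rcases (h.sub (h.tk_sub ht)).2.lt_or_eq with h1 | h1
  · have hA : ∀ u, t < u → ∃ s ∈ tsTk T, t < s ∧ s < u := by
      intro u hu
      obtain ⟨s, hs, h2, h3⟩ := h.exists_right (h.tk_sub ht) h1 hd (lt_min hu h1)
      exact ⟨s, h.mem_tk hs (h3.trans_le (min_le_right _ _)), h2, h3.trans_le (min_le_left _ _)⟩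
    unfold tsSigma
    split_ifs with hne
    · apply le_antisymm
      · apply le_of_forall_gt
        intro u hu
        obtain ⟨s, hs, h2, h3⟩ := hA u hu
        have h4 : sInf {s | s ∈ tsTk T ∧ t < s} ≤ s :=
          csInf_le ⟨t, fun s hs => hs.2.le⟩ ⟨hs, h2⟩
        exact h4.trans_lt h3
      · exact le_csInf hne fun s hs => hs.2.le
    · rfl
  · unfold tsSigma
    rw [if_neg]
    rintro ⟨s, hs, hbs⟩
    exact absurd (h.sub (h.tk_sub hs)).2 (not_le.2 (h1 ▸ hbs))

lemma nr_of_rd {E : Type*} [NormedAddCommGroup E] (h : TS T a b) {f : ℝ → E}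
    (hf : RdContinuousOn (tsTk T) f) : NR T f := by
  intro t ht
  refine ⟨fun hd => (hf t ht).1 (h.sigma_tk ht hd), ?_⟩
  by_cases hr : tsRho (tsTk T) t = t
  · exact (hf t ht).2 hr
  · refine ⟨0, ?_⟩
    have : 𝓝[tsTk T ∩ Iio t] t = ⊥ := by
      unfold tsRho at hr
      split_ifs at hr with hne
      · have hle : sSup {s | s ∈ tsTk T ∧ s < t} < t :=
          lt_of_le_of_ne (csSup_le hne fun s hs => hs.2.le) hr
        rw [← mem_closure_iff_nhdsWithin_neBot.not.trans not_neBot]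
        intro hc
        have : closure (tsTk T ∩ Iio t) ⊆ Iic (sSup {s | s ∈ tsTk T ∧ s < t}) :=
          closure_minimal (fun s hs => le_csSup ⟨t, fun s hs => hs.2.le⟩ hs) isClosed_Iic
        exact absurd (this hc) (not_le.2 hle)
      · exact absurd rfl hr
    rw [this]; exact tendsto_bot

lemma bounded_of_nr {E : Type*} [NormedAddCommGroup E] (h : TS T a b) {f : ℝ → E}
    (hf : NR T f) : ∃ M, ∀ t ∈ tsTk T, ‖f t‖ ≤ M := by
  refine h.tk_compact.induction_on (p := fun s => ∃ M, ∀ t ∈ s, ‖f t‖ ≤ M) ⟨0, by simp⟩ ?_ ?_ ?_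
  · rintro s t hst ⟨M, hM⟩
    exact ⟨M, fun x hx => hM x (hst hx)⟩
  · rintro s t ⟨M, hM⟩ ⟨N, hN⟩
    refine ⟨max M N, fun x hx => ?_⟩
    rcases hx with hx | hx
    · exact (hM x hx).trans (le_max_left _ _)
    · exact (hN x hx).trans (le_max_right _ _)
  · intro t ht
    obtain ⟨hc, l, hl⟩ := hf t ht
    by_cases hd : tsSigma T t = t
    · refine ⟨{x | ‖f x‖ ≤ ‖f t‖ + 1}, ?_, _, fun x hx => hx⟩
      exact ((hc hd).norm.eventually (ge_mem_nhds (by linarith)))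
    · refine ⟨{x | ‖f x‖ ≤ max (‖l‖ + 1) ‖f t‖}, ?_, _, fun x hx => hx⟩
      have h1 : ∀ᶠ x in 𝓝[tsTk T ∩ Iio t] t, ‖f x‖ ≤ ‖l‖ + 1 :=
        hl.norm.eventually (ge_mem_nhds (by linarith))
      have hlt : t < tsSigma T t := lt_of_le_of_ne (h.le_sigma ht.1) (Ne.symm hd)
      have h2 : ∀ᶠ x in 𝓝 t, x < tsSigma T t := gt_mem_nhds hlt
      rw [eventually_nhdsWithin_iff] at h1
      change ∀ᶠ x in 𝓝[tsTk T] t, _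
      rw [eventually_nhdsWithin_iff]
      filter_upwards [h1, h2] with x hx1 hx2 hx
      rcases lt_trichotomy x t with h3 | h3 | h3
      · exact (hx1 ⟨hx, h3⟩).trans (le_max_left _ _)
      · rw [h3]; exact le_max_right _ _
      · exact absurd (h.sigma_le ht.1 hx.1 h3) (not_le.2 hx2)

end TS

/-- floor map onto the time scale -/
def tsTau (T : Set ℝ) (a x : ℝ) : ℝ := sSup (T ∩ Iic (max x a))

namespace TS

variable {T : Set ℝ} {a b : ℝ}

lemma tau_mono (h : TS T a b) : Monotone (tsTau T a) := by
  intro x y hxy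
  unfold tsTau
  refine csSup_le_csSup ⟨max y a, fun s hs => hs.2⟩ ⟨a, h.ha, mem_Iic.2 (le_max_right _ _)⟩ ?_
  exact inter_subset_inter_right _ (Iic_subset_Iic.2 (max_le_max_right _ hxy))

lemma tau_mem (h : TS T a b) (x : ℝ) : tsTau T a x ∈ T := by
  have hne : (T ∩ Iic (max x a)).Nonempty := ⟨a, h.ha, mem_Iic.2 (le_max_right _ _)⟩
  have := csSup_mem_closure hne ⟨max x a, fun s hs => hs.2⟩
  rw [(h.closed.inter isClosed_Iic).closure_eq] at this
  exact this.1

lemma tau_le (h : TS T a b) {x : ℝ} (hx : a ≤ x) : tsTau T a x ≤ x := by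
  have hne : (T ∩ Iic (max x a)).Nonempty := ⟨a, h.ha, mem_Iic.2 (le_max_right _ _)⟩
  refine csSup_le hne fun s hs => ?_
  have := hs.2
  rwa [max_eq_left hx] at this

lemma le_tau (h : TS T a b) {s x : ℝ} (hs : s ∈ T) (hx : s ≤ x) : s ≤ tsTau T a x :=
  le_csSup ⟨max x a, fun s hs => hs.2⟩ ⟨hs, hx.trans (le_max_left _ _)⟩

lemma tau_mem_tk (h : TS T a b) {x : ℝ} (hx : a ≤ x) (hxb : x < b) : tsTau T a x ∈ tsTk T :=
  h.mem_tk (h.tau_mem x) ((h.tau_le hx).trans_lt hxb)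

lemma countable_rs (h : TS T a b) : {t ∈ tsTk T | tsSigma T t ≠ t}.Countable := by
  refine (countable_setOfPred_isolated_right_within (s := T)).mono ?_
  rintro t ⟨ht, hd⟩
  refine ⟨ht.1, ?_⟩
  have hlt := lt_of_le_of_ne (h.le_sigma ht.1) (Ne.symm hd)
  rw [← mem_closure_iff_nhdsWithin_neBot.not.trans not_neBot]
  intro hc
  have : closure (T ∩ Ioi t) ⊆ Ici (tsSigma T t) :=
    closure_minimal (fun s hs => h.sigma_le ht.1 hs.1 hs.2) isClosed_Ici
  exact absurd (this hc) (not_le.2 hlt)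

lemma meas_of_nr (h : TS T a b) {f : ℝ → ℝ} (hf : NR T f) :
    Measurable ((tsTk T).indicator f) := by
  classical
  have hD : MeasurableSet (tsTk T \ {t ∈ tsTk T | tsSigma T t ≠ t}) :=
    h.tk_compact.isClosed.measurableSet.diff h.countable_rs.measurableSet
  have hc : ContinuousOn f (tsTk T \ {t ∈ tsTk T | tsSigma T t ≠ t}) := by
    rintro t ⟨ht, hd⟩
    refine ((hf t ht).1 ?_).mono sdiff_subset
    by_contra h'
    exact hd ⟨ht, h'⟩
  have hm := hc.measurable_piecewise (g := fun _ => (0 : ℝ)) continuousOn_const hD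
  refine hm.measurable_of_countable_ne (h.countable_rs.mono ?_)
  intro t ht
  by_contra h'
  apply ht
  by_cases h1 : t ∈ tsTk T
  · have h2 : t ∈ tsTk T \ {t ∈ tsTk T | tsSigma T t ≠ t} := ⟨h1, h'⟩
    rw [indicator_of_mem h1, piecewise_eq_of_mem _ _ _ h2]
  · rw [indicator_of_notMem h1, piecewise_eq_of_notMem _ _ _ (fun h2 => h1 h2.1)]

lemma exists_antideriv (h : TS T a b) {f : ℝ → ℝ} (hf : NR T f) :
    ∃ F : ℝ → ℝ, IsDeltaAntideriv T f F ∧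
      (∀ x y, IntervalIntegrable (fun x => (tsTk T).indicator f (tsTau T a x)) volume x y) ∧
      F b - F a = ∫ x in a..b, (tsTk T).indicator f (tsTau T a x) := by
  obtain ⟨M, hM⟩ := h.bounded_of_nr hf
  have hM0 : 0 ≤ M := (norm_nonneg _).trans (hM a h.a_mem_tk)
  set g : ℝ → ℝ := fun x => (tsTk T).indicator f (tsTau T a x) with hg
  have gm : Measurable g := (h.meas_of_nr hf).comp h.tau_mono.measurable
  have gb : ∀ x, ‖g x‖ ≤ M := by
    intro x
    by_cases h1 : tsTau T a x ∈ tsTk T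
    · simp only [hg]; rw [indicator_of_mem h1]; exact hM _ h1
    · simp only [hg]; rw [indicator_of_notMem h1]; simpa using hM0
  have gi : ∀ x y, IntervalIntegrable g volume x y := by
    intro x y
    refine (intervalIntegrable_const (c := M)).mono_fun gm.aestronglyMeasurable ?_
    refine Eventually.of_forall fun z => (gb z).trans (le_abs_self M)
  refine ⟨fun t => ∫ x in a..t, g x, ?_, gi, by simp⟩
  intro t ht ε hε
  have htT := ht.1
  have sub : ∀ s u : ℝ, (∫ x in a..s, g x) - (∫ x in a..u, g x) = ∫ x in u..s, g x := fun s u =>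
    intervalIntegral.integral_interval_sub_left (gi _ _) (gi _ _)
  by_cases hd : tsSigma T t = t
  · rw [hd]
    have hc := (hf t ht).1 hd
    rw [Metric.continuousWithinAt_iff] at hc
    obtain ⟨δ, hδ, H⟩ := hc ε hε
    refine ⟨δ, hδ, ?_⟩
    rintro s ⟨hs, hs1, hs2⟩
    beta_reduce
    rw [sub]
    have e : (∫ x in s..t, g x) - (t - s) • f t = ∫ x in s..t, (g x - f t) := by
      rw [intervalIntegral.integral_sub (gi _ _) intervalIntegrable_const,
        intervalIntegral.integral_const]
    rw [e]
    refine intervalIntegral.norm_integral_le_of_norm_le_const_ae ?_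
    have hne : ∀ᵐ x : ℝ, x ≠ max s t := by
      simp [ae_iff, measure_singleton]
    filter_upwards [hne] with x hx hxm
    rw [uIoc, mem_Ioc] at hxm
    have hxlt : x < max s t := lt_of_le_of_ne hxm.2 hx
    have hmn : min s t ∈ T := by rcases min_choice s t with h1 | h1 <;> rw [h1] <;> assumption
    have hmx : max s t ∈ T := by rcases max_choice s t with h1 | h1 <;> rw [h1] <;> assumption
    have hax : a ≤ x := (h.sub hmn).1.trans hxm.1.le
    have h1 := h.tau_le hax
    have h2 := h.le_tau hmn hxm.1.le
    have h3 := h.tau_mem_tk hax (hxlt.trans_le (h.sub hmx).2)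
    have h4 : t - δ < min s t := lt_min hs1 (by linarith)
    have h5 : max s t < t + δ := max_lt hs2 (by linarith)
    have := H h3 (by rw [Real.dist_eq, abs_lt]; constructor <;> linarith)
    simp only [hg]
    rw [indicator_of_mem h3]
    exact this.le
  · have hlt : t < tsSigma T t := lt_of_le_of_ne (h.le_sigma htT) (Ne.symm hd)
    set m := tsSigma T t - t with hm
    have hm0 : 0 < m := by linarith
    have hC : 0 < M + |f t| + 1 := by positivity
    refine ⟨min (m / 2) (ε * (m / 2) / (M + |f t| + 1)), by positivity, ?_⟩
    rintro s ⟨hs, hs1, hs2⟩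
    have q1 := min_le_left (m / 2) (ε * (m / 2) / (M + |f t| + 1))
    have q2 := min_le_right (m / 2) (ε * (m / 2) / (M + |f t| + 1))
    have hst : |t - s| ≤ ε * (m / 2) / (M + |f t| + 1) := by
      rw [abs_le]; constructor <;> linarith
    have e1 : ∫ x in t..tsSigma T t, g x = m * f t := by
      have : ∫ x in t..tsSigma T t, g x = ∫ x in t..tsSigma T t, f t := by
        apply intervalIntegral.integral_congr_ae
        have hne : ∀ᵐ x : ℝ, x ≠ tsSigma T t := by
          simp [ae_iff, measure_singleton]
        filter_upwards [hne] with x hx hxm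
        rw [uIoc_of_le hlt.le, mem_Ioc] at hxm
        have hxlt : x < tsSigma T t := lt_of_le_of_ne hxm.2 hx
        have hax : a ≤ x := (h.sub htT).1.trans hxm.1.le
        have h1 := h.tau_le hax
        have h2 := h.le_tau htT hxm.1.le
        have h3 : tsTau T a x = t := by
          by_contra h4
          exact absurd (h.sigma_le htT (h.tau_mem x) (lt_of_le_of_ne h2 (Ne.symm h4)))
            (not_le.2 (h1.trans_lt hxlt))
        simp only [hg]
        rw [h3, indicator_of_mem ht]
      rw [this, intervalIntegral.integral_const, smul_eq_mul]
    beta_reduce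
    rw [sub, ← intervalIntegral.integral_add_adjacent_intervals (gi s t) (gi _ _), e1]
    have e2 : (∫ x in s..t, g x) + m * f t - (tsSigma T t - s) • f t
        = (∫ x in s..t, g x) - (t - s) * f t := by
      rw [smul_eq_mul, hm]; ring
    rw [e2]
    have n1 : ‖∫ x in s..t, g x‖ ≤ M * |t - s| :=
      intervalIntegral.norm_integral_le_of_norm_le_const fun x _ => gb x
    have n2 : ‖(t - s) * f t‖ = |f t| * |t - s| := by
      rw [norm_mul, Real.norm_eq_abs, Real.norm_eq_abs, mul_comm]
    have n3 : |t - s| * (M + |f t| + 1) ≤ ε * (m / 2) := (le_div_iff₀ hC).1 hst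
    have n4 : m / 2 ≤ |tsSigma T t - s| := le_trans (by linarith) (le_abs_self _)
    calc _ ≤ _ := norm_sub_le _ _
      _ ≤ M * |t - s| + |f t| * |t - s| := by rw [n2]; linarith
      _ ≤ ε * (m / 2) := by nlinarith [abs_nonneg (t - s)]
      _ ≤ _ := mul_le_mul_of_nonneg_left n4 hε.le

end TS

def phi (c t : ℝ) : ℝ := (max (c - t) 0) ^ 2

def psi (c : ℝ) (p : ℝ × ℝ) : ℝ :=
  ∫ r in (0:ℝ)..1, -2 * max (c - (p.1 + r * (p.2 - p.1))) 0

lemma psi_cont (c : ℝ) : Continuous (psi c) := by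
  unfold psi
  apply intervalIntegral.continuous_parametric_intervalIntegral_of_continuous'
  simp only [Function.uncurry_def]
  fun_prop

lemma phi_deriv (c t : ℝ) : HasDerivAt (phi c) (-2 * max (c - t) 0) t := by
  rcases lt_trichotomy t c with h | h | h
  · have h1 : HasDerivAt (fun x : ℝ => (c - x) ^ 2) (-2 * (c - t)) t := by
      have := ((hasDerivAt_id' t).const_sub c).fun_pow 2
      exact this.congr_deriv (by push_cast; ring)
    rw [max_eq_left (by linarith)]
    refine h1.congr_of_eventuallyEq ?_
    filter_upwards [gt_mem_nhds h] with x hx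
    unfold phi
    rw [max_eq_left (by linarith)]
  · subst h
    simp only [sub_self, max_self, mul_zero]
    rw [hasDerivAt_iff_isLittleO]
    have : (fun x : ℝ => phi t x - phi t t - (x - t) • (0:ℝ)) =O[𝓝 t] fun x => (x - t) ^ 2 := by
      apply Asymptotics.IsBigO.of_bound 1
      refine Eventually.of_forall fun x => ?_
      simp only [phi, sub_self, max_self, smul_zero, sub_zero, norm_pow, one_mul, Real.norm_eq_abs]
      simp only [ne_eq, OfNat.ofNat_ne_zero, not_false_eq_true, zero_pow, sub_zero, abs_pow]
      apply pow_le_pow_left₀ (abs_nonneg _)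
      rw [abs_of_nonneg (le_max_right _ _), abs_sub_comm]
      exact max_le (le_abs_self _) (abs_nonneg _)
    refine this.trans_isLittleO ?_
    have h2 := Asymptotics.isLittleO_pow_sub_sub t (m := 2) (by norm_num)
    simpa using h2
  · rw [max_eq_right (by linarith), mul_zero]
    refine (hasDerivAt_const t (0:ℝ)).congr_of_eventuallyEq ?_
    filter_upwards [lt_mem_nhds h] with x hx
    unfold phi
    rw [max_eq_right (by linarith)]; simp

lemma phi_sub (c x y : ℝ) : phi c y - phi c x = (y - x) * psi c (x, y) := by
  have h : ∀ r ∈ uIcc (0:ℝ) 1, HasDerivAt (fun r => phi c (x + r * (y - x)))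
      ((-2 * max (c - (x + r * (y - x))) 0) * (y - x)) r := by
    intro r _
    have h1 : HasDerivAt (fun r => x + r * (y - x)) (y - x) r := by
      simpa using ((hasDerivAt_id r).mul_const (y - x)).const_add x
    exact (phi_deriv c _).comp r h1
  have := intervalIntegral.integral_eq_sub_of_hasDerivAt h
    (Continuous.intervalIntegrable (by fun_prop) _ _)
  rw [intervalIntegral.integral_mul_const] at this
  simp only [one_mul, zero_mul, add_zero, add_sub_cancel] at this
  rw [← this, mul_comm]; rfl

lemma psi_self (c x : ℝ) : psi c (x, x) = -2 * max (c - x) 0 := by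
  simp [psi]

lemma psi_ge {c a x y : ℝ} (hc : a ≤ c) (hx : a ≤ x) (hy : a ≤ y) : -2 * (c - a) ≤ psi c (x, y) := by
  have h1 : ∫ r in (0:ℝ)..1, (-2 * (c - a)) ≤ psi c (x, y) := by
    refine intervalIntegral.integral_mono_on (by norm_num) (by simp)
      (Continuous.intervalIntegrable (by fun_prop) _ _) fun r hr => ?_
    have : max (c - (x + r * (y - x))) 0 ≤ c - a := by
      apply max_le _ (by linarith)
      nlinarith [hr.1, hr.2, mul_nonneg hr.1 (sub_nonneg.2 hy),
        mul_nonneg (sub_nonneg.2 hr.2) (sub_nonneg.2 hx)]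
    simp only
    linarith
  simpa using h1

lemma psi_ge_c {c x y : ℝ} (hx : c ≤ x) (hxy : x ≤ y) : psi c (x, y) = 0 := by
  rcases hxy.lt_or_eq with h | h
  · have := phi_sub c x y
    have h2 : phi c x = 0 := by unfold phi; rw [max_eq_right (by linarith)]; simp
    have h3 : phi c y = 0 := by unfold phi; rw [max_eq_right (by linarith)]; simp
    rw [h2, h3, sub_zero] at this
    rcases mul_eq_zero.1 this.symm with h4 | h4
    · linarith
    · exact h4
  · rw [← h, psi_self, max_eq_right (by linarith)]; simp

lemma phi_eq_zero {c x : ℝ} (hx : c ≤ x) : phi c x = 0 := by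
  unfold phi; rw [max_eq_right (by linarith)]; simp

lemma phi_nonneg (c x : ℝ) : 0 ≤ phi c x := sq_nonneg _

lemma psi_neg {c x y : ℝ} (hx : x < c) (hxy : x ≤ y) : psi c (x, y) < 0 := by
  rcases hxy.lt_or_eq with h | h
  · have := phi_sub c x y
    have h3 : phi c y < phi c x := by
      unfold phi
      apply pow_lt_pow_left₀ _ (le_max_right _ _) (by norm_num)
      rw [max_eq_left (a := c - x) (by linarith)]
      exact max_lt (by linarith) (by linarith)
    by_contra h4
    have := mul_nonneg (sub_nonneg.2 h.le) (not_lt.1 h4)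
    linarith
  · rw [← h, psi_self, max_eq_left (by linarith)]; linarith

lemma phi_le_psi {c a x y : ℝ} (hax : a ≤ x) (hx : x < c) (hxy : x ≤ y) :
    phi c y ≤ (c - a) * (- psi c (x, y)) := by
  rcases le_or_gt c y with hy | hy
  · rw [phi_eq_zero hy]
    exact mul_nonneg (by linarith) (by linarith [psi_neg hx hxy])
  · have hpsi : psi c (x, y) = -((c - x) + (c - y)) := by
      rcases hxy.lt_or_eq with h | h
      · have := phi_sub c x y
        unfold phi at this
        rw [max_eq_left (by linarith), max_eq_left (by linarith)] at this
        apply mul_left_cancel₀ (sub_pos.2 h).ne'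
        rw [← this]; ring
      · rw [← h, psi_self, max_eq_left (by linarith)]; ring
    rw [hpsi]
    unfold phi
    rw [max_eq_left (by linarith)]
    nlinarith

lemma phi_le {c a x : ℝ} (hc : a ≤ c) (hx : a ≤ x) : phi c x ≤ (c - a) ^ 2 := by
  unfold phi
  exact pow_le_pow_left₀ (le_max_right _ _) (max_le (by linarith) (by linarith)) 2

namespace TS

variable {T : Set ℝ} {a b : ℝ} {E : Type*} [NormedAddCommGroup E] [NormedSpace ℝ E]

lemma c1rd_var (h : TS T a b) {ys yds : ℝ → E} (hys : C1rd T ys yds) (c : ℝ) (u : E)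
    (hrd : RdContinuousOn (tsTk T) fun t => psi c (t, tsSigma T t)) :
    C1rd T (fun t => ys t + phi c t • u) (fun t => yds t + psi c (t, tsSigma T t) • u) := by
  constructor
  · intro t ht ε hε
    obtain ⟨δ, hδ, H⟩ := hys.1 t ht (ε / 2) (by positivity)
    have hcont : Continuous fun s => psi c (s, tsSigma T t) :=
      (psi_cont c).comp (by fun_prop)
    obtain ⟨δ', hδ', H'⟩ := Metric.continuous_iff.1 hcont t (ε / (2 * (‖u‖ + 1))) (by positivity)
    refine ⟨min δ δ', lt_min hδ hδ', ?_⟩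
    rintro s ⟨hs, hs1, hs2⟩
    have q1 := min_le_left δ δ'
    have q2 := min_le_right δ δ'
    have n1 := H s ⟨hs, by linarith, by linarith⟩
    have n2 := H' s (by rw [Real.dist_eq, abs_lt]; constructor <;> linarith)
    rw [Real.dist_eq] at n2
    have e : ys (tsSigma T t) + phi c (tsSigma T t) • u - (ys s + phi c s • u)
        - (tsSigma T t - s) • (yds t + psi c (t, tsSigma T t) • u)
        = (ys (tsSigma T t) - ys s - (tsSigma T t - s) • yds t)
          + ((tsSigma T t - s) * (psi c (s, tsSigma T t) - psi c (t, tsSigma T t))) • u := by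
      have : phi c (tsSigma T t) = phi c s + (tsSigma T t - s) * psi c (s, tsSigma T t) := by
        rw [← phi_sub]; ring
      rw [this]; module
    beta_reduce
    rw [e]
    refine (norm_add_le _ _).trans ?_
    rw [norm_smul, norm_mul, Real.norm_eq_abs, Real.norm_eq_abs]
    have n3 : |psi c (s, tsSigma T t) - psi c (t, tsSigma T t)| * ‖u‖ ≤ ε / 2 := by
      have k : ε / (2 * (‖u‖ + 1)) * (‖u‖ + 1) = ε / 2 := by field_simp
      rw [← k]
      exact mul_le_mul n2.le (by linarith) (norm_nonneg _) (by positivity)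
    have n4 := mul_le_mul_of_nonneg_left n3 (abs_nonneg (tsSigma T t - s))
    linarith
  · intro t ht
    refine ⟨fun hd => ((hys.2 t ht).1 hd).add (((hrd t ht).1 hd).smul_const u), fun hd => ?_⟩
    obtain ⟨l, hl⟩ := (hys.2 t ht).2 hd
    obtain ⟨m, hm⟩ := (hrd t ht).2 hd
    exact ⟨_, hl.add (hm.smul_const u)⟩

end TS

namespace TS

variable {T : Set ℝ} {a b : ℝ} {E : Type*} [NormedAddCommGroup E] [NormedSpace ℝ E]

lemma psi_rd (h : TS T a b) {c d : ℝ} (hcd : c < d) (hd : d ∈ T) (hdb : d < b) :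
    RdContinuousOn (tsTk T) fun t => psi c (t, tsSigma T t) := by
  intro t ht
  have hsub : 𝓝[tsTk T] t ≤ 𝓝[T] t := nhdsWithin_mono _ h.tk_sub
  have hid : Tendsto (fun s : ℝ => s) (𝓝 t) (𝓝 t) := tendsto_id
  refine ⟨fun hσ => ?_, fun _ => ⟨psi c (t, t), ?_⟩⟩
  · by_cases hT : tsSigma T t = t
    · have h1 : Tendsto (tsSigma T) (𝓝[tsTk T] t) (𝓝 t) :=
        ((h.sigma_cont ht.1 hT).mono_left hsub).mono_right nhdsWithin_le_nhds
      have h2 : Tendsto (fun s => (s, tsSigma T s)) (𝓝[tsTk T] t) (𝓝 (t, t)) :=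
        (hid.mono_left nhdsWithin_le_nhds).prodMk_nhds h1
      have h3 := ((psi_cont c).tendsto (t, t)).comp h2
      unfold ContinuousWithinAt
      beta_reduce
      rw [hT]
      exact h3
    · have hlt : t < tsSigma T t := lt_of_le_of_ne (h.le_sigma ht.1) (Ne.symm hT)
      rcases lt_or_ge t d with htd | htd
      · exfalso
        have h1 : tsSigma T t ≤ tsSigma (tsTk T) t := by
          have hne : ({s | s ∈ tsTk T ∧ t < s}).Nonempty := ⟨d, h.mem_tk hd hdb, htd⟩
          rw [show tsSigma (tsTk T) t = sInf {s | s ∈ tsTk T ∧ t < s} from if_pos hne]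
          exact le_csInf hne fun s hs => h.sigma_le ht.1 hs.1.1 hs.2
        linarith
      · have h0 : ∀ s ∈ T, c < s → psi c (s, tsSigma T s) = 0 := fun s hs hcs =>
          psi_ge_c hcs.le (h.le_sigma hs)
        refine (continuousWithinAt_const (b := (0:ℝ))).congr_of_eventuallyEq ?_
          (h0 t ht.1 (by linarith))
        filter_upwards [eventually_mem_nhdsWithin,
          nhdsWithin_le_nhds (lt_mem_nhds (show c < t by linarith))] with s hs hs2
        exact h0 s hs.1 hs2
  · have h1 : Tendsto (tsSigma T) (𝓝[tsTk T ∩ Iio t] t) (𝓝 t) :=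
      ((h.sigma_left ht.1).mono_left
        (nhdsWithin_mono _ (inter_subset_inter_left _ h.tk_sub))).mono_right nhdsWithin_le_nhds
    have h2 : Tendsto (fun s => (s, tsSigma T s)) (𝓝[tsTk T ∩ Iio t] t) (𝓝 (t, t)) :=
      (hid.mono_left nhdsWithin_le_nhds).prodMk_nhds h1
    exact ((psi_cont c).tendsto (t, t)).comp h2

lemma nr_comp (h : TS T a b) {L : ℝ → E → E → ℝ}
    (hLc : ContinuousOn (fun p : ℝ × E × E => L p.1 p.2.1 p.2.2)
      (T ×ˢ (univ : Set (E × E)))) {y yd : ℝ → E} (hy : C1rd T y yd) :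
    NR T fun t => L t (y (tsSigma T t)) (yd t) := by
  intro t ht
  obtain ⟨hc, l, hl⟩ := h.nr_of_rd hy.2 t ht
  have yc : ContinuousWithinAt y T t := h.cont_of_delta ht.1 (hy.1 t ht)
  have hid : Tendsto (fun s : ℝ => s) (𝓝 t) (𝓝 t) := tendsto_id
  have key : ∀ (F : Filter ℝ) (l : E), F ≤ 𝓝[T] t → Tendsto (tsSigma T) F (𝓝[T] t) →
      Tendsto yd F (𝓝 l) →
      Tendsto (fun s => L s (y (tsSigma T s)) (yd s)) F (𝓝 (L t (y t) l)) := by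
    intro F l hF hσ hyd
    have h1 : Tendsto (fun s => (s, y (tsSigma T s), yd s)) F
        (𝓝[T ×ˢ (univ : Set (E × E))] (t, y t, l)) := by
      refine tendsto_nhdsWithin_iff.2 ⟨?_, ?_⟩
      · exact (hid.mono_left (hF.trans nhdsWithin_le_nhds)).prodMk_nhds
          ((yc.tendsto.comp hσ).prodMk_nhds hyd)
      · have : ∀ᶠ s in F, s ∈ T := hF eventually_mem_nhdsWithin
        exact this.mono fun s hs => ⟨hs, mem_univ _⟩
    exact (hLc (t, y t, l) ⟨ht.1, mem_univ _⟩).tendsto.comp h1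
  have hsub : 𝓝[tsTk T] t ≤ 𝓝[T] t := nhdsWithin_mono _ h.tk_sub
  have hsub' : 𝓝[tsTk T ∩ Iio t] t ≤ 𝓝[T ∩ Iio t] t :=
    nhdsWithin_mono _ (inter_subset_inter_left _ h.tk_sub)
  refine ⟨fun hd => ?_, L t (y t) l, ?_⟩
  · have := key _ _ hsub ((h.sigma_cont ht.1 hd).mono_left hsub) (hc hd)
    unfold ContinuousWithinAt
    beta_reduce
    rw [hd]; exact this
  · exact key _ _ (hsub'.trans (nhdsWithin_mono _ inter_subset_left))
      ((h.sigma_left ht.1).mono_left hsub') hl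

/-- near `a`, the curve is near its value at `a` -/
lemma near_a (h : TS T a b) {y yd : ℝ → E} (hy : C1rd T y yd) {r : ℝ} (hr : 0 < r) :
    ∃ r' > 0, ∀ t ∈ T, t < a + r' →
      ‖y (tsSigma T t) - y (tsSigma T a)‖ < r ∧ ‖yd t - yd a‖ < r := by
  by_cases hd : tsSigma T a = a
  · have hta := h.a_mem_tk
    have hc := (h.nr_of_rd hy.2 a hta).1 hd
    have yc : ContinuousWithinAt y T a := h.cont_of_delta h.ha (hy.1 a hta)
    have h1 : Tendsto (fun s => y (tsSigma T s)) (𝓝[T] a) (𝓝 (y a)) :=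
      yc.tendsto.comp (h.sigma_cont h.ha hd)
    rw [Metric.tendsto_nhdsWithin_nhds] at h1
    rw [Metric.continuousWithinAt_iff] at hc
    obtain ⟨r1, hr1, H1⟩ := h1 r hr
    obtain ⟨r2, hr2, H2⟩ := hc r hr
    have hba : 0 < b - a := sub_pos.2 h.hab
    refine ⟨min (min r1 r2) (b - a), by positivity, fun t ht hta => ?_⟩
    have q1 := min_le_left (min r1 r2) (b - a)
    have q2 := min_le_right (min r1 r2) (b - a)
    have q3 := min_le_left r1 r2
    have q4 := min_le_right r1 r2
    have hat := (h.sub ht).1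
    rw [hd, ← dist_eq_norm, ← dist_eq_norm]
    refine ⟨H1 ht ?_, H2 (h.mem_tk ht (by linarith)) ?_⟩ <;>
      · rw [Real.dist_eq, abs_lt]; constructor <;> linarith
  · have hlt : a < tsSigma T a := lt_of_le_of_ne (h.le_sigma h.ha) (Ne.symm hd)
    refine ⟨tsSigma T a - a, by linarith, fun t ht hta => ?_⟩
    have : t = a := by
      by_contra h1
      have := h.sigma_le h.ha ht (lt_of_le_of_ne (h.sub ht).1 (Ne.symm h1))
      linarith
    subst this
    simp [hr]

end TS

lemma grad_mvt {n : ℕ} {f : En n → ℝ} {f' : En n → En n} (hf : ∀ z, HasGradientAt f (f' z) z)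
    (x u : En n) (C : ℝ) (hC : ∀ s ∈ Icc (0:ℝ) 1, inner ℝ (f' (x + s • u)) u ≤ C) :
    f (x + u) - f x ≤ C := by
  have hd : ∀ s : ℝ, HasDerivAt (fun s : ℝ => f (x + s • u)) (inner ℝ (f' (x + s • u)) u) s := by
    intro s
    have h1 : HasDerivAt (fun s : ℝ => x + s • u) u s := by
      simpa using ((hasDerivAt_id s).smul_const u).const_add x
    have := (hf (x + s • u)).hasFDerivAt.comp_hasDerivAt s h1
    rw [InnerProductSpace.toDual_apply_apply] at this
    exact this
  have := (convex_Icc (0:ℝ) 1).image_sub_le_mul_sub_of_deriv_le (f := fun s : ℝ => f (x + s • u))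
    (fun s _ => (hd s).continuousAt.continuousWithinAt)
    (fun s _ => (hd s).differentiableAt.differentiableWithinAt) (C := C)
    (fun s hs => by rw [(hd s).deriv]; exact hC s (interior_subset hs))
    0 (by simp) 1 (by simp) zero_le_one
  simpa using this

set_option maxHeartbeats 1000000 in
theorem transversality_sigma_form_left_endpoint_free
    {n : ℕ} (hn : 1 ≤ n)
    (T₀ : Set ℝ) (hT₀closed : IsClosed T₀)
    (a b : ℝ) (ha : a ∈ T₀) (hb : b ∈ T₀) (hab : a < b)
    (T : Set ℝ) (hT : T = Icc a b ∩ T₀)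
    (hT3 : ∃ c ∈ T, c ≠ a ∧ c ≠ b)
    (L : ℝ → En n → En n → ℝ) (Ly Lv : ℝ → En n → En n → En n)
    (hLc : ContinuousOn (fun p : ℝ × En n × En n => L p.1 p.2.1 p.2.2)
      (T ×ˢ (univ : Set (En n × En n))))
    (hLC2 : ∀ t ∈ T, ContDiff ℝ 2 (fun p : En n × En n => L t p.1 p.2))
    (hLy : ∀ t ∈ T, ∀ y v : En n, HasGradientAt (fun z => L t z v) (Ly t y v) y)
    (hLv : ∀ t ∈ T, ∀ y v : En n, HasGradientAt (fun z => L t y z) (Lv t y v) v)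
    (hLyc : ContinuousOn (fun p : ℝ × En n × En n => Ly p.1 p.2.1 p.2.2)
      (T ×ˢ (univ : Set (En n × En n))))
    (hLvc : ContinuousOn (fun p : ℝ × En n × En n => Lv p.1 p.2.1 p.2.2)
      (T ×ˢ (univ : Set (En n × En n))))
    (ys yds : ℝ → En n) (hys : C1rd T ys yds)
    (hmin : ∃ δ > 0, ∀ y yd : ℝ → En n, C1rd T y yd →
      y b = ys b →
      tsSupNorm (tsTk T) (fun t => y t - ys t)
        + tsSupNorm (tsTk T) (fun t => yd t - yds t) < δ →
      ∀ F G : ℝ → ℝ,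
        IsDeltaAntideriv T (fun t => L t (ys (tsSigma T t)) (yds t)) F →
        IsDeltaAntideriv T (fun t => L t (y (tsSigma T t)) (yd t)) G →
        F b - F a ≤ G b - G a) :
    Lv a (ys (tsSigma T a)) (yds a) = 0 := by
  obtain ⟨d, hdT, hda, hdb⟩ := hT3
  have h : TS T a b :=
    { closed := by rw [hT]; exact isClosed_Icc.inter hT₀closed
      ha := by rw [hT]; exact ⟨⟨le_rfl, hab.le⟩, ha⟩
      hb := by rw [hT]; exact ⟨⟨hab.le, le_rfl⟩, hb⟩
      sub := by rw [hT]; exact inter_subset_left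
      hab := hab }
  have hda' : a < d := lt_of_le_of_ne (h.sub hdT).1 (Ne.symm hda)
  have hdb' : d < b := lt_of_le_of_ne (h.sub hdT).2 hdb
  obtain ⟨δ, hδ, hmin⟩ := hmin
  by_contra hw
  set p0 := ys (tsSigma T a) with hp0
  set q0 := yds a with hq0
  set w := Lv a p0 q0 with hwdef
  have hw0 : 0 < ‖w‖ := norm_pos_iff.2 hw
  set M := |inner ℝ (Ly a p0 q0) w| + 1 with hMdef
  have hM0 : 0 < M := by positivity
  have hmem : ((a, p0, q0) : ℝ × En n × En n) ∈ T ×ˢ (univ : Set (En n × En n)) :=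
    ⟨h.ha, mem_univ _⟩
  have ev1 : ∀ᶠ p in 𝓝[T ×ˢ (univ : Set (En n × En n))] ((a, p0, q0) : ℝ × En n × En n),
      inner ℝ (Ly p.1 p.2.1 p.2.2) w < M := by
    have h1 := ((hLyc _ hmem).inner (𝕜 := ℝ) (continuousWithinAt_const (b := w))).tendsto
    refine h1.eventually (gt_mem_nhds ?_)
    have := le_abs_self (inner ℝ (Ly a p0 q0) w)
    simp only [hMdef]
    linarith
  have ev2 : ∀ᶠ p in 𝓝[T ×ˢ (univ : Set (En n × En n))] ((a, p0, q0) : ℝ × En n × En n),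
      ‖w‖ ^ 2 / 2 < inner ℝ (Lv p.1 p.2.1 p.2.2) w := by
    have h1 := ((hLvc _ hmem).inner (𝕜 := ℝ) (continuousWithinAt_const (b := w))).tendsto
    refine h1.eventually (lt_mem_nhds ?_)
    have : inner ℝ w w = ‖w‖ ^ 2 := real_inner_self_eq_norm_sq w
    change ‖w‖ ^ 2 / 2 < inner ℝ w w
    rw [this]
    have : 0 < ‖w‖ ^ 2 := by positivity
    linarith
  obtain ⟨r, hr, hball⟩ := Metric.mem_nhdsWithin_iff.1 (ev1.and ev2)
  have hball' : ∀ t ∈ T, |t - a| < r → ∀ p q : En n, ‖p - p0‖ < r → ‖q - q0‖ < r →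
      inner ℝ (Ly t p q) w < M ∧ ‖w‖ ^ 2 / 2 < inner ℝ (Lv t p q) w := by
    intro t ht hta p q hp hq
    have : ((t, p, q) : ℝ × En n × En n) ∈
        Metric.ball ((a, p0, q0) : ℝ × En n × En n) r ∩ T ×ˢ (univ : Set (En n × En n)) := by
      refine ⟨?_, ht, mem_univ _⟩
      rw [Metric.mem_ball, Prod.dist_eq, Prod.dist_eq]
      simp only [dist_eq_norm, Real.norm_eq_abs]
      exact max_lt hta (max_lt hp hq)
    exact hball this
  obtain ⟨r', hr', hnear⟩ := h.near_a hys (half_pos hr)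
  obtain ⟨e, he0, he1, he2, he3, he4⟩ : ∃ e > 0, e ≤ r ∧ e ≤ r' ∧ e < d - a ∧
      e * M < ‖w‖ ^ 2 / 2 := by
    have hd0 : 0 < d - a := by linarith
    have hw2 : 0 < ‖w‖ ^ 2 := by positivity
    refine ⟨min (min r r') (min ((d - a) / 2) (‖w‖ ^ 2 / (4 * M))), by positivity,
      (min_le_left _ _).trans (min_le_left _ _), (min_le_left _ _).trans (min_le_right _ _),
      ((min_le_right _ _).trans (min_le_left _ _)).trans_lt (by linarith), ?_⟩
    have h1 : min (min r r') (min ((d - a) / 2) (‖w‖ ^ 2 / (4 * M))) ≤ ‖w‖ ^ 2 / (4 * M) :=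
      (min_le_right _ _).trans (min_le_right _ _)
    have h2 := mul_le_mul_of_nonneg_right h1 hM0.le
    have h3 : ‖w‖ ^ 2 / (4 * M) * M = ‖w‖ ^ 2 / 4 := by field_simp
    linarith
  set c := a + e with hc
  have hca : c - a = e := by rw [hc]; ring
  obtain ⟨η, hη0, hη⟩ : ∃ η > 0, (e ^ 2 + 2 * e) * (η * ‖w‖) < min (r / 2) δ := by
    have hm : 0 < min (r / 2) δ := lt_min (by linarith) hδ
    refine ⟨min (r / 2) δ / (2 * ((e ^ 2 + 2 * e) * ‖w‖)), by positivity, ?_⟩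
    have : (e ^ 2 + 2 * e) * (min (r / 2) δ / (2 * ((e ^ 2 + 2 * e) * ‖w‖)) * ‖w‖)
        = min (r / 2) δ / 2 := by field_simp
    linarith
  have hηr := hη.trans_le (min_le_left _ _)
  have hηδ := hη.trans_le (min_le_right _ _)
  set u := η • w with hu
  have hun : ‖u‖ = η * ‖w‖ := by rw [hu, norm_smul, Real.norm_eq_abs, abs_of_pos hη0]
  have hun0 : 0 < ‖u‖ := by rw [hun]; positivity
  rw [← hun] at hηr hηδ
  have hphi : ∀ t ∈ T, ‖phi c t • u‖ ≤ e ^ 2 * ‖u‖ := by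
    intro t ht
    rw [norm_smul, Real.norm_eq_abs, abs_of_nonneg (phi_nonneg _ _)]
    have := phi_le (c := c) (a := a) (by linarith) (h.sub ht).1
    rw [hca] at this
    exact mul_le_mul_of_nonneg_right this (norm_nonneg _)
  have hpsi0 : ∀ t ∈ T, psi c (t, tsSigma T t) ≤ 0 := by
    intro t ht
    rcases lt_or_ge t c with h1 | h1
    · exact (psi_neg h1 (h.le_sigma ht)).le
    · exact (psi_ge_c h1 (h.le_sigma ht)).le
  have hpsi : ∀ t ∈ T, ‖psi c (t, tsSigma T t) • u‖ ≤ (2 * e) * ‖u‖ := by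
    intro t ht
    have h1 := psi_ge (c := c) (a := a) (by linarith) (h.sub ht).1 (h.sub (h.sigma_mem ht)).1
    rw [hca] at h1
    rw [norm_smul, Real.norm_eq_abs, abs_of_nonpos (hpsi0 t ht)]
    exact mul_le_mul_of_nonneg_right (by linarith) (norm_nonneg _)
  have hy := h.c1rd_var hys c u (h.psi_rd (by linarith) hdT hdb')
  set y : ℝ → En n := fun t => ys t + phi c t • u with hydef
  set yd : ℝ → En n := fun t => yds t + psi c (t, tsSigma T t) • u with hyddef
  have hyb : y b = ys b := by
    simp only [hydef]
    rw [phi_eq_zero (by linarith)]; simp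
  have hnorm : tsSupNorm (tsTk T) (fun t => y t - ys t)
        + tsSupNorm (tsTk T) (fun t => yd t - yds t) < δ := by
    have h1 : tsSupNorm (tsTk T) (fun t => y t - ys t) ≤ e ^ 2 * ‖u‖ := by
      apply csSup_le (Set.Nonempty.image _ ⟨a, h.a_mem_tk⟩)
      rintro _ ⟨t, ht, rfl⟩
      simp only [hydef, add_sub_cancel_left]
      exact hphi t ht.1
    have h2 : tsSupNorm (tsTk T) (fun t => yd t - yds t) ≤ (2 * e) * ‖u‖ := by
      apply csSup_le (Set.Nonempty.image _ ⟨a, h.a_mem_tk⟩)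
      rintro _ ⟨t, ht, rfl⟩
      simp only [hyddef, add_sub_cancel_left]
      exact hpsi t ht.1
    linarith
  obtain ⟨F, hF, iF, eF⟩ := h.exists_antideriv (h.nr_comp hLc hys)
  obtain ⟨G, hG, iG, eG⟩ := h.exists_antideriv (h.nr_comp hLc hy)
  have hle := hmin y yd hy hyb hnorm F G hF hG
  -- pointwise comparison
  have hlt : ∀ t ∈ T, t < c →
      L t (y (tsSigma T t)) (yd t) < L t (ys (tsSigma T t)) (yds t) := by
    intro t ht htc
    obtain ⟨hn1, hn2⟩ := hnear t ht (by linarith)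
    have hat := (h.sub ht).1
    have hta : |t - a| < r := by rw [abs_lt]; constructor <;> linarith
    have hA := phi_nonneg c (tsSigma T t)
    have hP := psi_neg htc (h.le_sigma ht)
    have hAP := phi_le_psi hat htc (h.le_sigma ht)
    have nA := hphi _ (h.sigma_mem ht)
    have nP := hpsi t ht
    simp only [hydef, hyddef]
    set p := ys (tsSigma T t)
    set q := yds t
    set A := phi c (tsSigma T t)
    set P := psi c (t, tsSigma T t)
    rw [hca] at hAP
    have z1 : 0 ≤ e ^ 2 * ‖u‖ := by positivity
    have z2 : 0 ≤ 2 * e * ‖u‖ := by positivity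
    have sm : ∀ (s : ℝ) (x : En n), s ∈ Icc (0:ℝ) 1 → ‖s • x‖ ≤ ‖x‖ := by
      intro s x hs
      rw [norm_smul, Real.norm_eq_abs, abs_of_nonneg hs.1]
      exact mul_le_of_le_one_left (norm_nonneg _) hs.2
    have nb : ∀ (x x0 v : En n), ‖x - x0‖ < r / 2 → ‖v‖ < r / 2 → ‖x + v - x0‖ < r := by
      intro x x0 v h1 h2
      have : x + v - x0 = (x - x0) + v := by abel
      rw [this]
      exact (norm_add_le _ _).trans_lt (by linarith)
    have s1 := grad_mvt (fun z => hLy t ht z (q + P • u)) p (A • u) (A * η * M) (by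
      intro s hs
      have := (hball' t ht hta (p + s • A • u) (q + P • u)
        (nb _ _ _ hn1 ((sm s _ hs).trans_lt (by linarith))) (nb _ _ _ hn2 (by linarith))).1
      rw [hu, inner_smul_right, inner_smul_right, ← mul_assoc]
      exact mul_le_mul_of_nonneg_left this.le (by positivity))
    have s2 := grad_mvt (fun z => hLv t ht p z) q (P • u) (P * η * (‖w‖ ^ 2 / 2)) (by
      intro s hs
      have := (hball' t ht hta p (q + s • P • u) (by linarith)
        (nb _ _ _ hn2 ((sm s _ hs).trans_lt (by linarith)))).2
      rw [hu, inner_smul_right, inner_smul_right, ← mul_assoc]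
      exact mul_le_mul_of_nonpos_left this.le (mul_nonpos_of_nonpos_of_nonneg hP.le hη0.le))
    have s3 : A * M + P * (‖w‖ ^ 2 / 2) < 0 := by
      have k1 := mul_le_mul_of_nonneg_right hAP hM0.le
      have k2 := mul_pos (neg_pos.2 hP) (sub_pos.2 he4)
      nlinarith
    have s4 := mul_pos hη0 (neg_pos.2 s3)
    have s5 : A * η * M + P * η * (‖w‖ ^ 2 / 2) = -(η * -(A * M + P * (‖w‖ ^ 2 / 2))) := by ring
    linarith
  have heq : ∀ t ∈ T, c ≤ t →
      L t (y (tsSigma T t)) (yd t) = L t (ys (tsSigma T t)) (yds t) := by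
    intro t ht htc
    simp only [hydef, hyddef]
    rw [phi_eq_zero (htc.trans (h.le_sigma ht)), psi_ge_c htc (h.le_sigma ht)]
    simp
  have hint : G b - G a < F b - F a := by
    rw [eF, eG]
    rw [← intervalIntegral.integral_add_adjacent_intervals (iF a c) (iF c b),
      ← intervalIntegral.integral_add_adjacent_intervals (iG a c) (iG c b)]
    apply add_lt_add_of_lt_of_le
    · rw [← sub_pos, ← intervalIntegral.integral_sub (iF a c) (iG a c)]
      apply intervalIntegral.intervalIntegral_pos_of_pos_on ((iF a c).sub (iG a c)) _ (by linarith)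
      intro x hx
      have hk := h.tau_mem_tk hx.1.le (by linarith [hx.2])
      rw [indicator_of_mem hk, indicator_of_mem hk, sub_pos]
      exact hlt _ hk.1 ((h.tau_le hx.1.le).trans_lt hx.2)
    · apply intervalIntegral.integral_mono_on (by linarith) (iG c b) (iF c b)
      intro x hx
      by_cases hk : tsTau T a x ∈ tsTk T
      · rw [indicator_of_mem hk, indicator_of_mem hk]
        rcases lt_or_ge (tsTau T a x) c with h1 | h1
        · exact (hlt _ hk.1 h1).le
        · exact (heq _ hk.1 h1).le
      · rw [indicator_of_notMem hk, indicator_of_notMem hk]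
  linarith
end
end
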